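/- Let X be a Peano space and T a maximal cyclic subset of X. Then the map r : X → T defined by r(x) = x for x ∈ T, and r(x) = the unique boundary point of the connected component of X \ T containing x otherwise, is continuous; in particular T is a retract of X. -/

import Mathlib

open Metric Set

/-- A Jordan curve: a subset homeomorphic to the circle. -/
def IsJordanCurve {X : Type} [TopologicalSpace X] (J : Set X) : Prop :=
  Nonempty (AddCircle (1 : ℝ) ≃ₜ J)

/-- A set is cyclicly connected if every pair of its points lies on a Jordan curve in it. -/
def CyclicallyConnected {X : Type} [TopologicalSpace X] (C : Set X) : Prop :=
  ∀ x ∈ C, ∀ y ∈ C, ∃ J : Set X, J ⊆ C ∧ IsJordanCurve J ∧ x ∈ J ∧ y ∈ J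

/-- A maximal cyclic subset: non-degenerate, cyclicly connected, and not a proper subset
of any cyclicly connected subset. -/
def MaximalCyclic {X : Type} [TopologicalSpace X] (T : Set X) : Prop :=
  ¬ T.Subsingleton ∧ CyclicallyConnected T ∧
    ∀ C : Set X, CyclicallyConnected C → T ⊆ C → C = T

open Topology Filter

/-!
By maximality `T` contains every arc joining two of its points: an arc leaving `T` and returning
would close up through `T` to a Jordan curve whose union with `T` is still cyclicly connected.

The main point is that `T` is closed. Suppose `p ∈ closure T` with `p ∉ T`, and follow an arc
running to `p` inside `T`. Near `p` every point of this arc can be bypassed by a short arc of `T`,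
so short pieces of the arc lie on small Jordan curves in `T`. Unions of finitely many of these
curves form a chain of cyclicly connected compacta shrinking to `p`, consecutive ones meeting in at
least two points and the others being disjoint. Two disjoint arcs cross each link, hence two arcs
that meet only in `p` run along the whole chain; together they are an arc through `p` with both ends
in `T`, so `p ∈ T`.

Once `T` is closed, `r` is constant on the components of its complement, and a connected
neighbourhood of a point of `T` that meets such a component contains its boundary point.
-/

theorem image_Icc_inter_image_Icc_of_injOn {X : Type*} {γ : ℝ → X} {a b t : ℝ}
    (hi : InjOn γ (Icc a b)) (ht : t ∈ Icc a b) : γ '' Icc a t ∩ γ '' Icc t b = {γ t} := by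
  rw [← hi.image_inter (Icc_subset_Icc le_rfl ht.2) (Icc_subset_Icc ht.1 le_rfl), Icc_inter_Icc,
    max_eq_right ht.1, min_eq_left ht.2, Icc_self, image_singleton]

/-! ### Arcs -/

section Arc

variable {X : Type*} [TopologicalSpace X] {S S' C : Set X} {x y z w : X}

/-- `S` is an arc from `x` to `y`: the image of a compact interval under a continuous injection.
Single points are allowed as degenerate arcs. -/
def IsArc (S : Set X) (x y : X) : Prop :=
  ∃ (a b : ℝ) (γ : ℝ → X), a ≤ b ∧ ContinuousOn γ (Icc a b) ∧ InjOn γ (Icc a b) ∧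
    γ a = x ∧ γ b = y ∧ γ '' Icc a b = S

theorem isArc_image {γ : ℝ → X} {a b c d : ℝ} (hc : ContinuousOn γ (Icc a b))
    (hi : InjOn γ (Icc a b)) (hac : a ≤ c) (hcd : c ≤ d) (hdb : d ≤ b) :
    IsArc (γ '' Icc c d) (γ c) (γ d) :=
  ⟨c, d, γ, hcd, hc.mono (Icc_subset_Icc hac hdb), hi.mono (Icc_subset_Icc hac hdb), rfl, rfl, rfl⟩

theorem isArc_singleton (x : X) : IsArc {x} x x :=
  ⟨0, 0, fun _ => x, le_rfl, continuousOn_const, by simp, rfl, rfl, by simp⟩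

theorem IsArc.exists_param_from (h : IsArc S x y) (c : ℝ) :
    ∃ (d : ℝ) (γ : ℝ → X), c ≤ d ∧ ContinuousOn γ (Icc c d) ∧ InjOn γ (Icc c d) ∧
      γ c = x ∧ γ d = y ∧ γ '' Icc c d = S := by
  obtain ⟨a, b, γ, hab, hc, hi, rfl, rfl, rfl⟩ := h
  have himage : (· + (a - c)) '' Icc c (c + (b - a)) = Icc a b := by
    rw [image_add_const_Icc]; congr 1 <;> ring
  have hmaps : MapsTo (· + (a - c)) (Icc c (c + (b - a))) (Icc a b) :=
    himage ▸ mapsTo_image _ _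
  refine ⟨c + (b - a), γ ∘ (· + (a - c)), by linarith,
    hc.comp (continuous_add_const _).continuousOn hmaps,
    hi.comp (add_left_injective _).injOn hmaps, ?_, ?_, ?_⟩
  · simp
  · rw [Function.comp_apply]; congr 1; ring
  · rw [image_comp, himage]

theorem IsArc.symm (h : IsArc S x y) : IsArc S y x := by
  obtain ⟨a, b, γ, hab, hc, hi, rfl, rfl, rfl⟩ := h
  have himage : Neg.neg '' Icc (-b) (-a) = Icc a b := by simp
  have hmaps : MapsTo Neg.neg (Icc (-b) (-a)) (Icc a b) := himage ▸ mapsTo_image _ _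
  refine ⟨-b, -a, γ ∘ Neg.neg, neg_le_neg hab, hc.comp continuous_neg.continuousOn hmaps,
    hi.comp neg_injective.injOn hmaps, ?_, ?_, ?_⟩
  · simp
  · simp
  · rw [image_comp, himage]

theorem IsArc.left_mem (h : IsArc S x y) : x ∈ S := by
  obtain ⟨a, b, γ, hab, -, -, rfl, rfl, rfl⟩ := h
  exact ⟨a, left_mem_Icc.2 hab, rfl⟩

theorem IsArc.right_mem (h : IsArc S x y) : y ∈ S := h.symm.left_mem

theorem IsArc.isCompact (h : IsArc S x y) : IsCompact S := by
  obtain ⟨a, b, γ, -, hc, -, rfl, rfl, rfl⟩ := h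
  exact isCompact_Icc.image_of_continuousOn hc

theorem IsArc.isClosed [T2Space X] (h : IsArc S x y) : IsClosed S := h.isCompact.isClosed

theorem IsArc.isPathConnected (h : IsArc S x y) : IsPathConnected S := by
  obtain ⟨a, b, γ, hab, hc, -, rfl, rfl, rfl⟩ := h
  exact ((convex_Icc a b).isPathConnected ⟨a, left_mem_Icc.2 hab⟩).image' hc

theorem IsArc.joinedIn (h : IsArc S x y) : JoinedIn S x y :=
  h.isPathConnected.joinedIn _ h.left_mem _ h.right_mem

theorem IsArc.eq_singleton (h : IsArc S x x) : S = {x} := by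
  obtain ⟨a, b, γ, hab, -, hi, ha, hb, rfl⟩ := h
  obtain rfl : a = b := hi (left_mem_Icc.2 hab) (right_mem_Icc.2 hab) (ha.trans hb.symm)
  simp [ha]

theorem exists_continuousOn_concat {γ δ : ℝ → X} {a b c : ℝ} (hab : a ≤ b) (hbc : b ≤ c)
    (hγ : ContinuousOn γ (Icc a b)) (hδ : ContinuousOn δ (Icc b c)) (hb : γ b = δ b) :
    ∃ e : ℝ → X, ContinuousOn e (Icc a c) ∧ EqOn e γ (Icc a b) ∧ EqOn e δ (Icc b c) := by
  have hleft : EqOn (fun t => if t ≤ b then γ t else δ t) γ (Icc a b) := fun t ht => if_pos ht.2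
  have hright : EqOn (fun t => if t ≤ b then γ t else δ t) δ (Icc b c) := by
    intro t ht
    rcases ht.1.eq_or_lt with rfl | h
    · simp [hb]
    · exact if_neg (not_le.2 h)
  refine ⟨_, ?_, hleft, hright⟩
  rw [← Icc_union_Icc_eq_Icc hab hbc]
  exact (hγ.congr hleft).union_of_isClosed (hδ.congr hright) isClosed_Icc isClosed_Icc

theorem IsArc.trans (h : IsArc S x y) (h' : IsArc S' y z) (hS : S ∩ S' ⊆ {y}) :
    IsArc (S ∪ S') x z := by
  obtain ⟨a, b, γ, hab, hc, hi, rfl, rfl, rfl⟩ := h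
  obtain ⟨c, δ, hbc, hc', hi', hb, rfl, rfl⟩ := h'.exists_param_from b
  obtain ⟨e, he, heγ, heδ⟩ := exists_continuousOn_concat hab hbc hc hc' hb.symm
  have hcross : ∀ s ∈ Icc a b, ∀ t ∈ Icc b c, e s = e t → s = t := by
    intro s hs t ht hst
    rw [heγ hs, heδ ht] at hst
    have hmeet : γ s = γ b := hS ⟨mem_image_of_mem γ hs, hst ▸ mem_image_of_mem δ ht⟩
    rw [hi hs (right_mem_Icc.2 hab) hmeet,
      hi' ht (left_mem_Icc.2 hbc) (hst.symm.trans (hmeet.trans hb.symm))]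
  refine ⟨a, c, e, hab.trans hbc, he, ?_, heγ (left_mem_Icc.2 hab), heδ (right_mem_Icc.2 hbc), ?_⟩
  · rw [← Icc_union_Icc_eq_Icc hab hbc]
    rintro s (hs | hs) t (ht | ht) hst
    · exact heγ.injOn_iff.2 hi hs ht hst
    · exact hcross s hs t ht hst
    · exact (hcross t ht s hs hst.symm).symm
    · exact heδ.injOn_iff.2 hi' hs ht hst
  · rw [← Icc_union_Icc_eq_Icc hab hbc, image_union, heγ.image_eq, heδ.image_eq]

theorem IsArc.split (h : IsArc S x y) (hz : z ∈ S) :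
    ∃ S₁ S₂, IsArc S₁ x z ∧ IsArc S₂ z y ∧ S₁ ∪ S₂ = S ∧ S₁ ∩ S₂ = {z} := by
  obtain ⟨a, b, γ, -, hc, hi, rfl, rfl, rfl⟩ := h
  obtain ⟨t, ht, rfl⟩ := hz
  exact ⟨γ '' Icc a t, γ '' Icc t b, isArc_image hc hi le_rfl ht.1 ht.2,
    isArc_image hc hi ht.1 ht.2 le_rfl, by rw [← image_union, Icc_union_Icc_eq_Icc ht.1 ht.2],
    image_Icc_inter_image_Icc_of_injOn hi ht⟩

theorem IsArc.exists_subarc (h : IsArc S x y) (hz : z ∈ S) (hw : w ∈ S) :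
    ∃ S' ⊆ S, IsArc S' z w := by
  obtain ⟨S₁, S₂, h₁, h₂, rfl, -⟩ := h.split hz
  rcases hw with hw | hw
  · obtain ⟨-, B, -, hB, rfl, -⟩ := h₁.split hw
    exact ⟨B, subset_union_right.trans subset_union_left, hB.symm⟩
  · obtain ⟨A, -, hA, -, rfl, -⟩ := h₂.split hw
    exact ⟨A, subset_union_left.trans subset_union_right, hA⟩

theorem IsArc.exists_firstHit (h : IsArc S x y) (hC : IsClosed C) (hSC : (S ∩ C).Nonempty) :
    ∃ z ∈ C, ∃ S₁ S₂, IsArc S₁ x z ∧ IsArc S₂ z y ∧ S₁ ∪ S₂ = S ∧ S₁ ∩ S₂ = {z} ∧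
      S₁ ∩ C = {z} := by
  obtain ⟨a, b, γ, -, hc, hi, rfl, rfl, rfl⟩ := h
  have hcompact : IsCompact (Icc a b ∩ γ ⁻¹' C) :=
    isCompact_Icc.of_isClosed_subset (hc.preimage_isClosed_of_isClosed isClosed_Icc hC)
      inter_subset_left
  obtain ⟨_, ⟨s, hs, rfl⟩, hsC⟩ := hSC
  obtain ⟨t, ⟨ht, htC⟩, hmin⟩ := hcompact.exists_isLeast ⟨s, hs, hsC⟩
  refine ⟨γ t, htC, γ '' Icc a t, γ '' Icc t b, isArc_image hc hi le_rfl ht.1 ht.2,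
    isArc_image hc hi ht.1 ht.2 le_rfl, by rw [← image_union, Icc_union_Icc_eq_Icc ht.1 ht.2],
    image_Icc_inter_image_Icc_of_injOn hi ht, Subset.antisymm ?_ ?_⟩
  · rintro _ ⟨⟨u, hu, rfl⟩, huC⟩
    rw [le_antisymm hu.2 (hmin ⟨⟨hu.1, hu.2.trans ht.2⟩, huC⟩)]
    rfl
  · rintro _ rfl
    exact ⟨mem_image_of_mem γ ⟨ht.1, le_rfl⟩, htC⟩

theorem IsArc.exists_excursion (h : IsArc S x y) (hC : IsClosed C) (hx : x ∈ C) (hy : y ∈ C)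
    (hz : z ∈ S) (hzC : z ∉ C) :
    ∃ G ⊆ S, ∃ c ∈ C, ∃ d ∈ C, c ≠ d ∧ IsArc G c d ∧ z ∈ G ∧ G ∩ C = {c, d} := by
  obtain ⟨S₁, S₂, h₁, h₂, rfl, h₁₂⟩ := h.split hz
  obtain ⟨c, hc, A, A', hA, -, hAS, -, hAC⟩ := h₁.symm.exists_firstHit hC ⟨x, h₁.left_mem, hx⟩
  obtain ⟨d, hd, B, B', hB, -, hBS, -, hBC⟩ := h₂.exists_firstHit hC ⟨y, h₂.right_mem, hy⟩
  have hAS₁ : A ⊆ S₁ := hAS ▸ subset_union_left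
  have hBS₂ : B ⊆ S₂ := hBS ▸ subset_union_left
  have hAB : A ∩ B ⊆ {z} := h₁₂ ▸ inter_subset_inter hAS₁ hBS₂
  refine ⟨A ∪ B, union_subset_union hAS₁ hBS₂, c, hc, d, hd, ?_, hA.symm.trans hB hAB,
    Or.inl hA.left_mem, by rw [union_inter_distrib_right, hAC, hBC]; rfl⟩
  rintro rfl
  have hcz : c = z := hAB ⟨hA.right_mem, hB.right_mem⟩
  exact hzC (hcz ▸ hc)

end Arc

/-! ### From paths to arcs -/

section PathToArc

open scoped unitInterval

variable {X : Type*}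

/-- A closed set of parameters containing both ends such that `f` agrees at the two ends of each
gap: skipping the gaps still leaves a path from `f 0` to `f 1`. -/
structure IsGapClosed (f : I → X) (K : Set I) : Prop where
  isClosed : IsClosed K
  zero_mem : 0 ∈ K
  one_mem : 1 ∈ K
  eq_of_gap : ∀ s ∈ K, ∀ t ∈ K, s < t → Disjoint (Ioo s t) K → f s = f t

variable {f : I → X} {K : Set I}

theorem IsGapClosed.exists_isGreatest (hK : IsGapClosed f K) (t : I) :
    ∃ m, IsGreatest (K ∩ Iic t) m :=
  (hK.isClosed.inter isClosed_Iic).isCompact.exists_isGreatest ⟨0, hK.zero_mem, mem_Iic.2 bot_le⟩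

theorem IsGapClosed.exists_isLeast (hK : IsGapClosed f K) (t : I) :
    ∃ n, IsLeast (K ∩ Ici t) n :=
  (hK.isClosed.inter isClosed_Ici).isCompact.exists_isLeast ⟨1, hK.one_mem, mem_Ici.2 le_top⟩

theorem IsGapClosed.eq_of_isGreatest_of_isLeast (hK : IsGapClosed f K) {t m n : I}
    (hm : IsGreatest (K ∩ Iic t) m) (hn : IsLeast (K ∩ Ici t) n) : f m = f n := by
  rcases (hm.1.2.trans hn.1.2 : m ≤ n).eq_or_lt with h | h
  · rw [h]
  refine hK.eq_of_gap m hm.1.1 n hn.1.1 h (disjoint_left.2 fun k hk hkK => ?_)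
  rcases le_total k t with hkt | htk
  · exact (hm.2 ⟨hkK, hkt⟩).not_gt hk.1
  · exact (hn.2 ⟨hkK, htk⟩).not_gt hk.2

theorem isGapClosed_univ (f : I → X) : IsGapClosed f univ where
  isClosed := isClosed_univ
  zero_mem := mem_univ _
  one_mem := mem_univ _
  eq_of_gap := fun _ _ _ _ hst hd =>
    absurd (disjoint_univ.1 hd) (nonempty_Ioo.2 hst).ne_empty

theorem IsGapClosed.not_subset_of_disjoint [TopologicalSpace X] (hf : Continuous f)
    (hK : IsGapClosed f K) {U V : Set X} (hU : IsOpen U) (hV : IsOpen V) (hUV : Disjoint U V)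
    {s t : I} (hst : s ≤ t) (hs : s ∈ K) (ht : t ∈ K) (hsU : f s ∈ U) (htV : f t ∈ V) :
    ¬ K ∩ Icc s t ⊆ f ⁻¹' U ∪ f ⁻¹' V := by
  intro hsub
  have hclosed {W : Set X} (hW : IsOpen W) (u : I) : IsCompact (K ∩ Icc u t ∩ (f ⁻¹' W)ᶜ) :=
    ((hK.isClosed.inter isClosed_Icc).inter (hW.preimage hf).isClosed_compl).isCompact
  obtain ⟨m, ⟨⟨hmK, hm⟩, hmV⟩, hmax⟩ := (hclosed hV s).exists_isGreatest
    ⟨s, ⟨hs, left_mem_Icc.2 hst⟩, fun h => disjoint_left.1 hUV hsU h⟩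
  obtain ⟨n, ⟨⟨hnK, hn⟩, hnU⟩, hmin⟩ := (hclosed hU m).exists_isLeast
    ⟨t, ⟨ht, right_mem_Icc.2 hm.2⟩, fun h => disjoint_left.1 hUV h htV⟩
  have hmU : f m ∈ U := (hsub ⟨hmK, hm⟩).resolve_right hmV
  have hnV : f n ∈ V := (hsub ⟨hnK, hm.1.trans hn.1, hn.2⟩).resolve_left hnU
  have hmn : m < n := hn.1.lt_of_ne fun h => hnU (h ▸ hmU)
  have hgap : Disjoint (Ioo m n) K := disjoint_left.2 fun k hk hkK => by
    have hkV : f k ∈ V := by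
      by_contra h
      exact (hmax ⟨⟨hkK, hm.1.trans hk.1.le, hk.2.le.trans hn.2⟩, h⟩).not_gt hk.1
    exact (hmin ⟨⟨hkK, hk.1.le, hk.2.le.trans hn.2⟩, fun h => disjoint_left.1 hUV h hkV⟩).not_gt
      hk.2
  exact disjoint_left.1 hUV hmU (hK.eq_of_gap m hmK n hnK hmn hgap ▸ hnV)

theorem isGapClosed_sInter_of_isChain [TopologicalSpace X] [T2Space X] (hf : Continuous f)
    {c : Set (Set I)} (hc : ∀ K ∈ c, IsGapClosed f K) (hchain : IsChain (· ⊆ ·) c)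
    (hne : c.Nonempty) : IsGapClosed f (⋂₀ c) where
  isClosed := isClosed_sInter fun K hK => (hc K hK).isClosed
  zero_mem := fun K hK => (hc K hK).zero_mem
  one_mem := fun K hK => (hc K hK).one_mem
  eq_of_gap := by
    intro s hs t ht hst hd
    by_contra hne'
    obtain ⟨U, V, hU, hV, hsU, htV, hUV⟩ := t2_separation hne'
    have hcov : ⋂₀ c ⊆ (Icc s t)ᶜ ∪ (f ⁻¹' U ∪ f ⁻¹' V) := by
      intro u hu
      by_cases hust : u ∈ Icc s t
      · rcases eq_endpoints_or_mem_Ioo_of_mem_Icc hust with rfl | rfl | h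
        · exact Or.inr (Or.inl hsU)
        · exact Or.inr (Or.inr htV)
        · exact absurd hu (disjoint_left.1 hd h)
      · exact Or.inl hust
    have hcne : Nonempty c := hne.to_subtype
    rw [sInter_eq_iInter] at hcov
    have hdir : Directed (· ⊇ ·) fun K : c => (K : Set I) := fun A B =>
      (hchain.total A.2 B.2).elim (fun h => ⟨A, Subset.rfl, h⟩) fun h => ⟨B, h, Subset.rfl⟩
    obtain ⟨⟨K, hKc⟩, hK⟩ := exists_subset_nhds_of_compactSpace hdir
      (fun K => (hc _ K.2).isClosed)
      (fun u hu => (isClosed_Icc.isOpen_compl.union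
        ((hU.preimage hf).union (hV.preimage hf))).mem_nhds (hcov hu))
    exact (hc K hKc).not_subset_of_disjoint hf hU hV hUV hst.le (hs K hKc) (ht K hKc) hsU htV
      fun u hu => (hK hu.1).resolve_left (not_not_intro hu.2)

theorem exists_minimal_isGapClosed [TopologicalSpace X] [T2Space X] (hf : Continuous f) :
    ∃ K, Minimal (IsGapClosed f) K := by
  refine zorn_superset {K | IsGapClosed f K} fun c hc hchain => ?_
  rcases c.eq_empty_or_nonempty with rfl | hne
  · exact ⟨univ, isGapClosed_univ f, by simp⟩
  · exact ⟨⋂₀ c, isGapClosed_sInter_of_isChain hf hc hchain hne,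
      fun K hK => sInter_subset_of_mem hK⟩

theorem IsGapClosed.diff_Ioo (hK : IsGapClosed f K) {s t : I} (hs : s ∈ K) (ht : t ∈ K)
    (hst : f s = f t) : IsGapClosed f (K \ Ioo s t) where
  isClosed := hK.isClosed.sdiff isOpen_Ioo
  zero_mem := ⟨hK.zero_mem, fun h => bot_le.not_gt h.1⟩
  one_mem := ⟨hK.one_mem, fun h => le_top.not_gt h.2⟩
  eq_of_gap := by
    intro s' hs' t' ht' hst' hd
    by_cases hd' : Disjoint (Ioo s' t') K
    · exact hK.eq_of_gap s' hs'.1 t' ht'.1 hst' hd'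
    obtain ⟨k, hk', hkK⟩ := not_disjoint_iff.1 hd'
    have hk : k ∈ Ioo s t := by
      by_contra h
      exact disjoint_left.1 hd hk' ⟨hkK, h⟩
    have hss' : s' = s := by
      refine le_antisymm (not_lt.1 fun h => hs'.2 ⟨h, hk'.1.trans hk.2⟩) (not_lt.1 fun h => ?_)
      exact disjoint_left.1 hd ⟨h, hk.1.trans hk'.2⟩ ⟨hs, fun h => lt_irrefl _ h.1⟩
    have htt' : t' = t := by
      refine le_antisymm (not_lt.1 fun h => ?_) (not_lt.1 fun h => ht'.2 ⟨hk.1.trans hk'.2, h⟩)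
      exact disjoint_left.1 hd ⟨hk'.1.trans hk.2, h⟩ ⟨ht, fun h => lt_irrefl _ h.2⟩
    rw [hss', htt', hst]

theorem Ioo_disjoint_of_minimal_isGapClosed (hK : Minimal (IsGapClosed f) K) {s t : I}
    (hs : s ∈ K) (ht : t ∈ K) (hst : f s = f t) : Disjoint (Ioo s t) K :=
  disjoint_left.2 fun _ hu huK => (hK.2 (hK.1.diff_Ioo hs ht hst) sdiff_subset huK).2 hu

theorem IsGapClosed.eq_or_exists_mem_uIcc (hK : IsGapClosed f K) {m : I → I}
    (hm : ∀ t, IsGreatest (K ∩ Iic t) (m t)) (t u : I) :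
    m u = m t ∨ ∃ v ∈ K, v ∈ uIcc t u ∧ f (m u) = f v := by
  rcases le_total t u with htu | hut
  · rcases le_total t (m u) with h | h
    · exact Or.inr ⟨m u, (hm u).1.1, Icc_subset_uIcc ⟨h, (hm u).1.2⟩, rfl⟩
    · exact Or.inl (le_antisymm ((hm t).2 ⟨(hm u).1.1, h⟩)
        ((hm u).2 ⟨(hm t).1.1, (hm t).1.2.trans htu⟩))
  · obtain ⟨n, hn⟩ := hK.exists_isLeast u
    rcases le_total n t with h | h
    · exact Or.inr ⟨n, hn.1.1, Icc_subset_uIcc' ⟨hn.1.2, h⟩,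
        hK.eq_of_isGreatest_of_isLeast (hm u) hn⟩
    · rcases le_total (m t) u with h' | h'
      · exact Or.inl (le_antisymm ((hm t).2 ⟨(hm u).1.1, (hm u).1.2.trans hut⟩)
          ((hm u).2 ⟨(hm t).1.1, h'⟩))
      · exact Or.inr ⟨m t, (hm t).1.1, Icc_subset_uIcc' ⟨h', (hm t).1.2⟩, by
          rw [hK.eq_of_isGreatest_of_isLeast (hm u) hn,
            le_antisymm (hn.2 ⟨(hm t).1.1, h'⟩) ((hm t).1.2.trans h)]⟩

theorem IsGapClosed.continuous_comp_isGreatest [TopologicalSpace X] (hf : Continuous f)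
    (hK : IsGapClosed f K) {m : I → I} (hm : ∀ t, IsGreatest (K ∩ Iic t) (m t)) :
    Continuous (f ∘ m) := by
  refine continuous_iff_continuousAt.2 fun t => ?_
  by_cases ht : t ∈ K
  · have hmt : m t = t := le_antisymm (hm t).1.2 ((hm t).2 ⟨ht, self_mem_Iic⟩)
    refine tendsto_def.2 fun U hU => ?_
    rw [Function.comp_apply, hmt] at hU
    filter_upwards [ordConnectedComponent_mem_nhds.2 (hf.continuousAt hU)] with u hu
    rcases hK.eq_or_exists_mem_uIcc hm t u with h | ⟨v, -, hv, h⟩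
    · rw [mem_preimage, Function.comp_apply, h, hmt]
      exact mem_of_mem_nhds hU
    · rw [mem_preimage, Function.comp_apply, h]
      exact hu hv
  · refine (continuousAt_const (y := f (m t))).congr ?_
    filter_upwards [ordConnectedComponent_mem_nhds.2 (hK.isClosed.isOpen_compl.mem_nhds ht)]
      with u hu
    rcases hK.eq_or_exists_mem_uIcc hm t u with h | ⟨v, hvK, hv, -⟩
    · rw [Function.comp_apply, h]
    · exact absurd hvK (hu hv)

theorem ordConnected_fiber_of_minimal_isGapClosed (hK : Minimal (IsGapClosed f) K) {m : I → I}
    (hm : ∀ t, IsGreatest (K ∩ Iic t) (m t)) (p : X) : ((f ∘ m) ⁻¹' {p}).OrdConnected := by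
  have hmono : Monotone m := fun s t hst =>
    (hm t).2 ⟨(hm s).1.1, (hm s).1.2.trans hst⟩
  refine ⟨fun s hs t ht u hu => ?_⟩
  have hd := Ioo_disjoint_of_minimal_isGapClosed hK (hm s).1.1 (hm t).1.1
    ((hs : f (m s) = p).trans (ht : f (m t) = p).symm)
  rcases eq_endpoints_or_mem_Ioo_of_mem_Icc ⟨hmono hu.1, hmono hu.2⟩ with h | h | h
  · exact (congrArg f h).trans hs
  · exact (congrArg f h).trans ht
  · exact absurd (hm u).1.1 (disjoint_left.1 hd h)

theorem exists_path_fibers_ordConnected [TopologicalSpace X] [T2Space X] {F : Set X} {x y : X}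
    (h : JoinedIn F x y) : ∃ g : I → X, Continuous g ∧ (∀ p, (g ⁻¹' {p}).OrdConnected) ∧
      g 0 = x ∧ g 1 = y ∧ ∀ t, g t ∈ F := by
  obtain ⟨f, hfF⟩ := h
  obtain ⟨K, hK⟩ := exists_minimal_isGapClosed f.continuous
  choose m hm using hK.1.exists_isGreatest
  have hm_of_mem {t : I} (ht : t ∈ K) : m t = t :=
    le_antisymm (hm t).1.2 ((hm t).2 ⟨ht, self_mem_Iic⟩)
  refine ⟨f ∘ m, hK.1.continuous_comp_isGreatest f.continuous hm,
    ordConnected_fiber_of_minimal_isGapClosed hK hm, ?_, ?_, fun t => hfF _⟩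
  · rw [Function.comp_apply, hm_of_mem hK.1.zero_mem, f.source]
  · rw [Function.comp_apply, hm_of_mem hK.1.one_mem, f.target]

end PathToArc

section Reparametrization

variable {X : Type*} [PseudoMetricSpace X] {g : ℝ → X}

theorem isBounded_image_Icc (hg : Continuous g) (s t : ℝ) : Bornology.IsBounded (g '' Icc s t) :=
  (isCompact_Icc.image hg).isBounded

theorem diam_image_Icc_le_add (hg : Continuous g) (u : ℝ) {s t : ℝ} (hst : s ≤ t) :
    diam (g '' Icc u t) ≤ diam (g '' Icc u s) + diam (g '' Icc s t) := by
  rcases le_total u s with hus | hsu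
  · rw [← Icc_union_Icc_eq_Icc hus hst, image_union]
    exact diam_union' ⟨g s, mem_image_of_mem g (right_mem_Icc.2 hus),
      mem_image_of_mem g (left_mem_Icc.2 hst)⟩
  · exact (diam_mono (image_mono (Icc_subset_Icc_left hsu)) (isBounded_image_Icc hg s t)).trans
      (le_add_of_nonneg_left diam_nonneg)

/-- The total size of the path `g` up to time `t`, averaging the diameter of `g '' Icc u t` over
all starting times `u ∈ [a, b]`. Unlike arc length it is always finite, and it stops growing
exactly where `g` is constant. -/
noncomputable def meanDiam (g : ℝ → X) (a b t : ℝ) : ℝ :=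
  ∫ u in a..b, diam (g '' Icc u t)

theorem intervalIntegrable_diam_image_Icc (hg : Continuous g) (a b t : ℝ) :
    IntervalIntegrable (fun u => diam (g '' Icc u t)) MeasureTheory.volume a b :=
  Antitone.intervalIntegrable fun u _ huv =>
    diam_mono (image_mono (Icc_subset_Icc_left huv)) (isBounded_image_Icc hg u t)

theorem monotone_meanDiam (hg : Continuous g) {a b : ℝ} (hab : a ≤ b) :
    Monotone (meanDiam g a b) := fun s t hst =>
  intervalIntegral.integral_mono hab (intervalIntegrable_diam_image_Icc hg a b s)
    (intervalIntegrable_diam_image_Icc hg a b t) fun u =>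
      diam_mono (image_mono (Icc_subset_Icc_right hst)) (isBounded_image_Icc hg u t)

theorem meanDiam_sub_le (hg : Continuous g) {a b s t : ℝ} (hab : a ≤ b) (hst : s ≤ t) :
    meanDiam g a b t - meanDiam g a b s ≤ (b - a) * diam (g '' Icc s t) := by
  rw [meanDiam, meanDiam, ← intervalIntegral.integral_sub
    (intervalIntegrable_diam_image_Icc hg a b t) (intervalIntegrable_diam_image_Icc hg a b s),
    ← smul_eq_mul, ← intervalIntegral.integral_const]
  refine intervalIntegral.integral_mono hab ((intervalIntegrable_diam_image_Icc hg a b t).sub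
    (intervalIntegrable_diam_image_Icc hg a b s)) intervalIntegrable_const fun u => ?_
  exact sub_le_iff_le_add'.2 (diam_image_Icc_le_add hg u hst)

theorem continuous_meanDiam (hg : Continuous g) {a b : ℝ} (hab : a ≤ b) :
    Continuous (meanDiam g a b) := by
  refine continuous_iff.2 fun t ε hε => ?_
  set η := ε / (2 * (b - a) + 1)
  have hden : 0 < 2 * (b - a) + 1 := by linarith
  obtain ⟨δ, hδ, hgδ⟩ := continuous_iff.1 hg t η (div_pos hε hden)
  refine ⟨δ, hδ, fun s hs => ?_⟩
  have hdiam : diam (g '' uIcc s t) ≤ 2 * η := by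
    refine (diam_mono ?_ isBounded_ball).trans (diam_ball (x := g t) (div_pos hε hden).le)
    rintro _ ⟨u, hu, rfl⟩
    refine mem_ball.2 (hgδ u ((?_ : dist u t ≤ dist s t).trans_lt hs))
    exact Real.dist_right_le_of_mem_uIcc hu
  have hdist : dist (meanDiam g a b s) (meanDiam g a b t) ≤ (b - a) * diam (g '' uIcc s t) := by
    rcases le_total s t with hst | hts
    · rw [uIcc_of_le hst, Real.dist_eq, abs_sub_comm,
        abs_of_nonneg (sub_nonneg.2 (monotone_meanDiam hg hab hst))]
      exact meanDiam_sub_le hg hab hst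
    · rw [uIcc_of_ge hts, Real.dist_eq,
        abs_of_nonneg (sub_nonneg.2 (monotone_meanDiam hg hab hts))]
      exact meanDiam_sub_le hg hab hts
  calc dist (meanDiam g a b s) (meanDiam g a b t)
      ≤ (b - a) * (2 * η) := hdist.trans (by gcongr)
    _ < (2 * (b - a) + 1) * η := by linarith [div_pos hε hden]
    _ = ε := mul_div_cancel₀ ε hden.ne'

end Reparametrization

section

variable {X : Type*} [MetricSpace X] {g : ℝ → X}

theorem meanDiam_lt (hg : Continuous g) {a b s t : ℝ} (has : a ≤ s) (hst : s ≤ t) (htb : t ≤ b)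
    (hne : g s ≠ g t) : meanDiam g a b s < meanDiam g a b t := by
  have hlt : s < t := hst.lt_of_ne fun h => hne (h ▸ rfl)
  obtain ⟨c, hc, hne_t⟩ := (mem_nhdsGE_iff_exists_mem_Ioc_Ico_subset hlt).1
    (mem_nhdsWithin_of_mem_nhds (hg.continuousAt.eventually_ne hne))
  have hint := (intervalIntegrable_diam_image_Icc hg a b t).sub
    (intervalIntegrable_diam_image_Icc hg a b s)
  refine sub_pos.1 ?_
  calc 0 < ∫ u in s..c, (diam (g '' Icc u t) - diam (g '' Icc u s)) := by
        refine intervalIntegral.intervalIntegral_pos_of_pos_on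
          ((intervalIntegrable_diam_image_Icc hg s c t).sub
            (intervalIntegrable_diam_image_Icc hg s c s)) (fun u hu => ?_) hc.1
        have hut : u ≤ t := hu.2.le.trans hc.2
        rw [Icc_eq_empty hu.1.not_ge, image_empty, diam_empty, sub_zero]
        exact (dist_pos.2 (hne_t ⟨hu.1.le, hu.2⟩)).trans_le
          (dist_le_diam_of_mem (isBounded_image_Icc hg u t)
            (mem_image_of_mem g (left_mem_Icc.2 hut)) (mem_image_of_mem g (right_mem_Icc.2 hut)))
    _ ≤ ∫ u in a..b, (diam (g '' Icc u t) - diam (g '' Icc u s)) :=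
        intervalIntegral.integral_mono_interval has hc.1.le (hc.2.trans htb)
          (Eventually.of_forall fun u => sub_nonneg.2 (diam_mono
            (image_mono (Icc_subset_Icc_right hst)) (isBounded_image_Icc hg u t))) hint
    _ = meanDiam g a b t - meanDiam g a b s :=
        intervalIntegral.integral_sub (intervalIntegrable_diam_image_Icc hg a b t)
          (intervalIntegrable_diam_image_Icc hg a b s)

theorem isArc_image_of_fibers_ordConnected (hg : Continuous g)
    (hfib : ∀ p, (g ⁻¹' {p}).OrdConnected) {a b : ℝ} (hab : a ≤ b) :
    IsArc (g '' Icc a b) (g a) (g b) := by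
  set Φ := meanDiam g a b
  have hmono : Monotone Φ := monotone_meanDiam hg hab
  have hcont : Continuous Φ := continuous_meanDiam hg hab
  have hconst {s t : ℝ} (hst : s ≤ t) (h : g s = g t) : Φ s = Φ t := by
    have hsub : (g '' Icc s t).Subsingleton := by
      rintro _ ⟨u, hu, rfl⟩ _ ⟨v, hv, rfl⟩
      rw [(hfib (g t)).out h rfl hu, (hfib (g t)).out h rfl hv]
    refine le_antisymm (hmono hst) (sub_nonpos.1 ?_)
    simpa only [diam_subsingleton hsub, mul_zero] using meanDiam_sub_le hg hab hst
  have hΦg : ∀ s ∈ Icc a b, ∀ t ∈ Icc a b, Φ s = Φ t ↔ g s = g t := by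
    intro s hs t ht
    wlog hst : s ≤ t generalizing s t
    · rw [eq_comm, this t ht s hs (le_of_not_ge hst), eq_comm]
    refine ⟨fun h => ?_, hconst hst⟩
    by_contra hne
    exact (meanDiam_lt hg hs.1 hst ht.2 hne).ne h
  have himage : Φ '' Icc a b = Icc (Φ a) (Φ b) :=
    Subset.antisymm (image_subset_iff.2 fun t ht => ⟨hmono ht.1, hmono ht.2⟩)
      (intermediate_value_Icc hab hcont.continuousOn)
  choose! ψ hψ hΦψ using fun w (hw : w ∈ Icc (Φ a) (Φ b)) => himage.superset hw
  have hgψ : EqOn (g ∘ ψ ∘ Φ) g (Icc a b) := fun t ht =>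
    have hw := himage.subset (mem_image_of_mem Φ ht)
    (hΦg _ (hψ _ hw) t ht).1 (hΦψ _ hw)
  refine ⟨Φ a, Φ b, g ∘ ψ, hmono hab, ?_, ?_, hgψ (left_mem_Icc.2 hab),
    hgψ (right_mem_Icc.2 hab), ?_⟩
  · refine continuousOn_iff_isClosed.2 fun C hC => ⟨Φ '' (Icc a b ∩ g ⁻¹' C),
      ((isCompact_Icc.inter_right (hC.preimage hg)).image hcont).isClosed, ?_⟩
    refine Subset.antisymm (fun w hw => ⟨⟨ψ w, ⟨hψ w hw.2, hw.1⟩, hΦψ w hw.2⟩, hw.2⟩) ?_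
    rintro _ ⟨⟨t, ⟨ht, htC⟩, rfl⟩, hw⟩
    exact ⟨mem_preimage.2 (hgψ ht ▸ htC : (g ∘ ψ ∘ Φ) t ∈ C), hw⟩
  · intro w hw w' hw' h
    rw [← hΦψ w hw, ← hΦψ w' hw', hΦg _ (hψ w hw) _ (hψ w' hw')]
    exact h
  · rw [← himage, ← image_comp]
    exact hgψ.image_eq

theorem exists_isArc_of_joinedIn {F : Set X} {x y : X} (h : JoinedIn F x y) :
    ∃ S ⊆ F, IsArc S x y := by
  obtain ⟨g, hg, hfib, rfl, rfl, hF⟩ := exists_path_fibers_ordConnected h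
  have harc := isArc_image_of_fibers_ordConnected
    (hg.comp (continuous_projIcc (h := zero_le_one' ℝ)))
    (fun p => (hfib p).preimage_mono (monotone_projIcc _)) (zero_le_one' ℝ)
  rw [Function.comp_apply, Function.comp_apply, projIcc_left, projIcc_right] at harc
  exact ⟨_, image_subset_iff.2 fun t _ => hF _, harc⟩

end

/-! ### Jordan curves -/

section Jordan

variable {X : Type} [TopologicalSpace X]

section

variable [T2Space X]

theorem isJordanCurve_image {f : ℝ → X} {a b : ℝ} (hab : a < b) (hf : ContinuousOn f (Icc a b))
    (hi : InjOn f (Ico a b)) (h : f a = f b) : IsJordanCurve (f '' Icc a b) := by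
  obtain ⟨p, rfl⟩ : ∃ p, b = a + p := ⟨b - a, by ring⟩
  have hp : Fact (0 < p) := ⟨pos_of_lt_add_right hab⟩
  set F : AddCircle p → X := AddCircle.liftIco p a f
  have hF : ∀ t ∈ Ico a (a + p), F t = f t := fun t ht => AddCircle.liftIco_coe_apply ht
  have hrep : ∀ u : AddCircle p, ∃ t ∈ Ico a (a + p), (t : AddCircle p) = u := fun u =>
    (AddCircle.coe_image_Ico_eq p a).symm.subset (mem_univ u)
  have hFinj : Function.Injective F := by
    intro u v huv
    obtain ⟨s, hs, rfl⟩ := hrep u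
    obtain ⟨t, ht, rfl⟩ := hrep v
    rw [hF s hs, hF t ht] at huv
    rw [hi hs ht huv]
  have hrange : range F = f '' Icc a (a + p) := by
    rw [← Ico_union_right hab.le, image_union, image_singleton, ← h, union_eq_left.2
      (singleton_subset_iff.2 (mem_image_of_mem f (left_mem_Ico.2 hab)))]
    ext x
    constructor
    · rintro ⟨u, rfl⟩
      obtain ⟨t, ht, rfl⟩ := hrep u
      exact ⟨t, ht, (hF t ht).symm⟩
    · rintro ⟨t, ht, rfl⟩
      exact ⟨t, hF t ht⟩
  exact hrange ▸ ⟨(AddCircle.homeomorphAddCircle 1 p one_ne_zero hp.out.ne').trans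
    ((AddCircle.liftIco_continuous h hf).isClosedEmbedding hFinj).isEmbedding.toHomeomorph⟩

variable {J J₁ J₂ A B G : Set X} {a b x y : X}

theorem IsArc.isJordanCurve (hA : IsArc A x y) (hB : IsArc B x y) (hxy : x ≠ y)
    (hAB : A ∩ B ⊆ {x, y}) : IsJordanCurve (A ∪ B) := by
  obtain ⟨a, b, γ, hab, hc, hi, rfl, rfl, rfl⟩ := hA
  obtain ⟨c, δ, hbc, hc', hi', hδb, hδc, rfl⟩ := hB.symm.exists_param_from b
  have hab' : a < b := hab.lt_of_ne fun h => hxy (h ▸ rfl)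
  have hbc' : b < c := hbc.lt_of_ne fun h => hxy (by rw [← hδc, ← hδb, h])
  obtain ⟨e, he, heγ, heδ⟩ := exists_continuousOn_concat hab hbc hc hc' hδb.symm
  have himage : e '' Icc a c = γ '' Icc a b ∪ δ '' Icc b c := by
    rw [← Icc_union_Icc_eq_Icc hab hbc, image_union, heγ.image_eq, heδ.image_eq]
  have hcross : ∀ s ∈ Icc a b, ∀ t ∈ Ico b c, e s = e t → s = t := by
    intro s hs t ht hst
    have ht' : t ∈ Icc b c := Ico_subset_Icc_self ht
    rw [heγ hs, heδ ht'] at hst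
    rcases hAB ⟨mem_image_of_mem γ hs, hst ▸ mem_image_of_mem δ ht'⟩ with h | h
    · exact absurd (hi' ht' (right_mem_Icc.2 hbc) (hst.symm.trans (h.trans hδc.symm))) ht.2.ne
    · rw [hi hs (right_mem_Icc.2 hab) h,
        hi' ht' (left_mem_Icc.2 hbc) (hst.symm.trans (h.trans hδb.symm))]
  rw [← himage]
  refine isJordanCurve_image (hab'.trans hbc') he ?_ ?_
  · rw [← Icc_union_Ico_eq_Ico hab hbc']
    rintro s (hs | hs) t (ht | ht) hst
    · exact heγ.injOn_iff.2 hi hs ht hst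
    · exact hcross s hs t ht hst
    · exact (hcross t ht s hs hst.symm).symm
    · exact heδ.injOn_iff.2 hi' (Ico_subset_Icc_self hs) (Ico_subset_Icc_self ht) hst
  · rw [heγ (left_mem_Icc.2 hab), heδ (right_mem_Icc.2 hbc), hδc]

end

variable {J J₁ J₂ A B G : Set X} {a b x y : X}

theorem IsJordanCurve.isCompact (hJ : IsJordanCurve J) : IsCompact J := by
  obtain ⟨φ⟩ := hJ
  exact isCompact_iff_compactSpace.2 φ.compactSpace

theorem IsJordanCurve.isClosed [T2Space X] (hJ : IsJordanCurve J) : IsClosed J :=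
  hJ.isCompact.isClosed

theorem IsJordanCurve.exists_param (hJ : IsJordanCurve J) (ha : a ∈ J) :
    ∃ f : ℝ → X, Continuous f ∧ f 0 = a ∧ f 1 = a ∧ InjOn f (Ico 0 1) ∧ f '' Icc 0 1 = J := by
  obtain ⟨φ⟩ := hJ
  obtain ⟨α, hα⟩ := φ.surjective ⟨a, ha⟩
  refine ⟨fun t => φ (α + t), ?_, ?_, ?_, ?_, ?_⟩
  · exact continuous_subtype_val.comp
      (φ.continuous.comp (continuous_const.add (AddCircle.continuous_mk' 1)))
  · simp [hα]
  · simp [hα, AddCircle.coe_period]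
  · intro u hu v hv huv
    exact (AddCircle.coe_eq_coe_iff_of_mem_Ico (a := 0) (by simpa using hu) (by simpa using hv)).1
      (add_left_cancel (φ.injective (Subtype.ext huv)))
  · refine Subset.antisymm (image_subset_iff.2 fun t _ => (φ _).2) fun p hp => ?_
    obtain ⟨t, ht, htα⟩ := AddCircle.eq_coe_Ico (φ.symm ⟨p, hp⟩ - α)
    exact ⟨t, Ico_subset_Icc_self ht, by simp [htα]⟩

theorem IsJordanCurve.split (hJ : IsJordanCurve J) (ha : a ∈ J) (hb : b ∈ J) (hab : a ≠ b) :
    ∃ A B, IsArc A a b ∧ IsArc B a b ∧ A ∪ B = J ∧ A ∩ B = {a, b} := by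
  obtain ⟨f, hf, hf0, hf1, hinj, rfl⟩ := hJ.exists_param ha
  obtain ⟨s, hs, rfl⟩ := hb
  have hs0 : 0 < s := hs.1.lt_of_ne fun h => hab (by rw [← hf0, h])
  have hs1 : s < 1 := hs.2.lt_of_ne fun h => hab (by rw [← hf1, h])
  have hcross : ∀ u ∈ Icc 0 s, ∀ v ∈ Icc s 1, f u = f v → (u = 0 ∧ v = 1) ∨ (u = s ∧ v = s) := by
    intro u hu v hv huv
    have hu' : u ∈ Ico 0 1 := ⟨hu.1, hu.2.trans_lt hs1⟩
    rcases hv.2.eq_or_lt with rfl | hv1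
    · exact Or.inl ⟨hinj hu' (left_mem_Ico.2 one_pos) (by rw [huv, hf1, hf0]), rfl⟩
    · have huv' : u = v := hinj hu' ⟨hs0.le.trans hv.1, hv1⟩ huv
      exact Or.inr ⟨le_antisymm hu.2 (huv' ▸ hv.1), le_antisymm (huv' ▸ hu.2) hv.1⟩
  have hinj' : InjOn f (Icc s 1) := by
    intro u hu v hv huv
    rcases hu.2.eq_or_lt with rfl | hu1
    · rcases hcross 0 (left_mem_Icc.2 hs0.le) v hv (by rw [hf0, ← huv, hf1]) with h | h
      · exact h.2.symm
      · exact absurd h.1 hs0.ne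
    · rcases hv.2.eq_or_lt with rfl | hv1
      · rcases hcross 0 (left_mem_Icc.2 hs0.le) u hu (by rw [hf0, huv, hf1]) with h | h
        · exact h.2
        · exact absurd h.1 hs0.ne
      · exact hinj ⟨hs0.le.trans hu.1, hu1⟩ ⟨hs0.le.trans hv.1, hv1⟩ huv
  have hinj₀ : InjOn f (Icc 0 s) := hinj.mono (Icc_subset_Ico_right hs1)
  refine ⟨f '' Icc 0 s, f '' Icc s 1, hf0 ▸ isArc_image hf.continuousOn hinj₀ le_rfl hs0.le le_rfl,
    hf1 ▸ (isArc_image hf.continuousOn hinj' le_rfl hs1.le le_rfl).symm,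
    by rw [← image_union, Icc_union_Icc_eq_Icc hs.1 hs.2], Subset.antisymm ?_ ?_⟩
  · rintro _ ⟨⟨u, hu, rfl⟩, v, hv, huv⟩
    rcases hcross u hu v hv huv.symm with ⟨rfl, -⟩ | ⟨rfl, -⟩
    · exact Or.inl hf0
    · exact Or.inr rfl
  · rintro _ (rfl | rfl)
    · exact ⟨⟨0, left_mem_Icc.2 hs0.le, hf0⟩, 1, right_mem_Icc.2 hs1.le, hf1⟩
    · exact ⟨⟨s, right_mem_Icc.2 hs0.le, rfl⟩, s, left_mem_Icc.2 hs1.le, rfl⟩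

theorem IsJordanCurve.exists_isArc_mem (hJ : IsJordanCurve J) (ha : a ∈ J) (hb : b ∈ J)
    (hab : a ≠ b) (hx : x ∈ J) : ∃ S ⊆ J, IsArc S a b ∧ x ∈ S := by
  obtain ⟨A, B, hA, hB, rfl, -⟩ := hJ.split ha hb hab
  rcases hx with hx | hx
  · exact ⟨A, subset_union_left, hA, hx⟩
  · exact ⟨B, subset_union_right, hB, hx⟩

theorem IsJordanCurve.exists_isArc_notMem (hJ : IsJordanCurve J) (ha : a ∈ J) (hb : b ∈ J)
    (hax : a ≠ x) (hbx : b ≠ x) : ∃ S ⊆ J, IsArc S a b ∧ x ∉ S := by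
  rcases eq_or_ne a b with rfl | hab
  · exact ⟨{a}, singleton_subset_iff.2 ha, isArc_singleton a, hax.symm⟩
  obtain ⟨A, B, hA, hB, rfl, hAB⟩ := hJ.split ha hb hab
  by_cases hxA : x ∈ A
  · refine ⟨B, subset_union_right, hB, fun hxB => ?_⟩
    rcases hAB.subset ⟨hxA, hxB⟩ with h | h
    · exact hax h.symm
    · exact hbx h.symm
  · exact ⟨A, subset_union_left, hA, hxA⟩

theorem IsJordanCurve.exists_theta [T2Space X] (hJ : IsJordanCurve J) (hG : IsArc G a b)
    (hab : a ≠ b) (hGJ : G ∩ J = {a, b}) (hx : x ∈ J) :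
    ∃ J' ⊆ J ∪ G, IsJordanCurve J' ∧ x ∈ J' ∧ G ⊆ J' := by
  obtain ⟨S, hSJ, hS, hxS⟩ := hJ.exists_isArc_mem (hGJ.ge (mem_insert a _)).2
    (hGJ.ge (mem_insert_of_mem a rfl)).2 hab hx
  refine ⟨S ∪ G, union_subset_union_left G hSJ, hS.isJordanCurve hG hab ?_, Or.inl hxS,
    subset_union_right⟩
  exact fun z hz => hGJ.subset ⟨hz.2, hSJ hz.1⟩

end Jordan

/-! ### Cyclicly connected sets -/

section CyclicallyConnected

variable {X : Type} [TopologicalSpace X] {T J N A B D E : Set X} {a b c e q u v w x y z : X}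

theorem IsJordanCurve.cyclicallyConnected (hJ : IsJordanCurve J) : CyclicallyConnected J :=
  fun _ hx _ hy => ⟨J, Subset.rfl, hJ, hx, hy⟩

theorem CyclicallyConnected.exists_isArc_notMem (hT : CyclicallyConnected T) (ha : a ∈ T)
    (hb : b ∈ T) (hax : a ≠ x) (hbx : b ≠ x) : ∃ S ⊆ T, IsArc S a b ∧ x ∉ S := by
  obtain ⟨J, hJT, hJ, haJ, hbJ⟩ := hT a ha b hb
  obtain ⟨S, hSJ, hS, hxS⟩ := hJ.exists_isArc_notMem haJ hbJ hax hbx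
  exact ⟨S, hSJ.trans hJT, hS, hxS⟩

theorem IsArc.exists_detour (hA : IsArc A a c) (hD : IsArc D e q) (heA : e ∈ A) (hec : e ≠ c)
    (hAB : A ∩ B = {c}) (hDAB : D ∩ (A ∪ B) = {e}) (hN : IsClosed N) (hq : q ∈ N) :
    ∃ a', ∃ A' ⊆ A ∪ D, IsArc A' a a' ∧ A' ∩ N = {a'} ∧ Disjoint A' B := by
  obtain ⟨A₁, A₂, hA₁, hA₂, rfl, hA₁₂⟩ := hA.split heA
  have hA₁D : IsArc (A₁ ∪ D) a q :=
    hA₁.trans hD fun x hx => hDAB.subset ⟨hx.2, Or.inl (Or.inl hx.1)⟩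
  obtain ⟨a', -, A', A'', hA', -, hsub, -, hA'N⟩ :=
    hA₁D.exists_firstHit hN ⟨q, hA₁D.right_mem, hq⟩
  replace hsub : A' ⊆ A₁ ∪ D := hsub ▸ subset_union_left
  have hcA₁ : c ∉ A₁ := fun h => hec (hA₁₂.subset ⟨h, hA₂.right_mem⟩).symm
  refine ⟨a', A', hsub.trans (union_subset_union_left D subset_union_left), hA', hA'N,
    disjoint_left.2 fun x hxA' hxB => ?_⟩
  rcases hsub hxA' with hx | hx
  · exact hcA₁ (hAB.subset ⟨Or.inl hx, hxB⟩ ▸ hx)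
  · obtain rfl : x = e := hDAB.subset ⟨hx, Or.inr hxB⟩
    exact hec (hAB.subset ⟨heA, hxB⟩)

variable [T2Space X]

theorem CyclicallyConnected.exists_isArc_mem (hT : CyclicallyConnected T) (ha : a ∈ T)
    (hb : b ∈ T) (hab : a ≠ b) (hw : w ∈ T) : ∃ S ⊆ T, IsArc S a b ∧ w ∈ S := by
  rcases eq_or_ne a w with rfl | haw
  · obtain ⟨J, hJT, hJ, haJ, hbJ⟩ := hT a ha b hb
    obtain ⟨S, hSJ, hS, haS⟩ := hJ.exists_isArc_mem haJ hbJ hab haJ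
    exact ⟨S, hSJ.trans hJT, hS, haS⟩
  obtain ⟨J, hJT, hJ, haJ, hwJ⟩ := hT a ha w hw
  by_cases hbJ : b ∈ J
  · obtain ⟨S, hSJ, hS, hwS⟩ := hJ.exists_isArc_mem haJ hbJ hab hwJ
    exact ⟨S, hSJ.trans hJT, hS, hwS⟩
  obtain ⟨L, hLT, hL, haL⟩ := hT.exists_isArc_notMem hb hw hab.symm haw.symm
  obtain ⟨z, hzJ, M, M', hM, -, hMM', -, hMJ⟩ :=
    hL.exists_firstHit hJ.isClosed ⟨w, hL.right_mem, hwJ⟩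
  have hML : M ⊆ L := hMM' ▸ subset_union_left
  have hza : z ≠ a := fun h => haL (hML (h ▸ hM.right_mem))
  obtain ⟨S, hSJ, hS, hwS⟩ := hJ.exists_isArc_mem haJ hzJ hza.symm hwJ
  exact ⟨S ∪ M, union_subset (hSJ.trans hJT) (hML.trans hLT),
    hS.trans hM.symm (fun x hx => hMJ.subset ⟨hx.2, hSJ hx.1⟩), Or.inl hwS⟩

theorem CyclicallyConnected.union_isJordanCurve (hT : CyclicallyConnected T)
    (hJ : IsJordanCurve J) (hTJ : (T ∩ J).Nontrivial) : CyclicallyConnected (T ∪ J) := by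
  obtain ⟨a, ⟨haT, haJ⟩, b, ⟨hbT, hbJ⟩, hab⟩ := hTJ
  have hmixed : ∀ x ∈ J, ∀ y ∈ T, ∃ J' ⊆ T ∪ J, IsJordanCurve J' ∧ x ∈ J' ∧ y ∈ J' := by
    intro x hx y hy
    by_cases hyJ : y ∈ J
    · exact ⟨J, subset_union_right, hJ, hx, hyJ⟩
    obtain ⟨S, hST, hS, hyS⟩ := hT.exists_isArc_mem haT hbT hab hy
    obtain ⟨G, hGS, c, -, d, -, hcd, hG, hyG, hGJ⟩ :=
      hS.exists_excursion hJ.isClosed haJ hbJ hyS hyJ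
    obtain ⟨J', hJ'J, hJ', hxJ', hGJ'⟩ := hJ.exists_theta hG hcd hGJ hx
    exact ⟨J', hJ'J.trans (union_subset subset_union_right
      ((hGS.trans hST).trans subset_union_left)), hJ', hxJ', hGJ' hyG⟩
  rintro x (hx | hx) y (hy | hy)
  · obtain ⟨J', hJ'T, hJ', hxJ', hyJ'⟩ := hT x hx y hy
    exact ⟨J', hJ'T.trans subset_union_left, hJ', hxJ', hyJ'⟩
  · obtain ⟨J', hJ'T, hJ', hyJ', hxJ'⟩ := hmixed y hy x hx
    exact ⟨J', hJ'T, hJ', hxJ', hyJ'⟩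
  · exact hmixed x hx y hy
  · exact ⟨J, subset_union_right, hJ, hx, hy⟩

theorem CyclicallyConnected.union {U : Set X} (hT : CyclicallyConnected T)
    (hU : CyclicallyConnected U) (hTU : (T ∩ U).Nontrivial) : CyclicallyConnected (T ∪ U) := by
  obtain ⟨a, ⟨haT, haU⟩, b, ⟨hbT, hbU⟩, hab⟩ := hTU
  obtain ⟨J, hJU, hJ, haJ, hbJ⟩ := hU a haU b hbU
  have hTJ : CyclicallyConnected (T ∪ J) :=
    hT.union_isJordanCurve hJ ⟨a, ⟨haT, haJ⟩, b, ⟨hbT, hbJ⟩, hab⟩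
  have hmixed : ∀ x ∈ T, ∀ y ∈ U, ∃ L ⊆ T ∪ U, IsJordanCurve L ∧ x ∈ L ∧ y ∈ L := by
    intro x hx y hy
    by_cases hyJ : y ∈ J
    · obtain ⟨L, hLTJ, hL⟩ := hTJ x (Or.inl hx) y (Or.inr hyJ)
      exact ⟨L, hLTJ.trans (union_subset_union_right T hJU), hL⟩
    obtain ⟨S, hSU, hS, hyS⟩ := hU.exists_isArc_mem haU hbU hab hy
    obtain ⟨G, hGS, c, hc, d, hd, hcd, hG, hyG, hGJ⟩ :=
      hS.exists_excursion hJ.isClosed haJ hbJ hyS hyJ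
    obtain ⟨J', hJ'J, hJ', -, hGJ'⟩ := hJ.exists_theta hG hcd hGJ hc
    obtain ⟨L, hLTJ, hL⟩ := hTJ.union_isJordanCurve hJ' ⟨c, ⟨Or.inr hc, hGJ' hG.left_mem⟩, d,
      ⟨Or.inr hd, hGJ' hG.right_mem⟩, hcd⟩ x (Or.inl (Or.inl hx)) y (Or.inr (hGJ' hyG))
    exact ⟨L, hLTJ.trans (union_subset (union_subset_union_right T hJU) ((hJ'J.trans
      (union_subset hJU (hGS.trans hSU))).trans subset_union_right)), hL⟩
  rintro x (hx | hx) y (hy | hy)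
  · obtain ⟨L, hLT, hL⟩ := hT x hx y hy
    exact ⟨L, hLT.trans subset_union_left, hL⟩
  · exact hmixed x hx y hy
  · obtain ⟨L, hLTU, hL, hyL, hxL⟩ := hmixed y hy x hx
    exact ⟨L, hLTU, hL, hxL, hyL⟩
  · obtain ⟨L, hLU, hL⟩ := hU x hx y hy
    exact ⟨L, hLU.trans subset_union_right, hL⟩

/-- A set is arc-convex if it contains every arc joining two of its points. -/
def ArcConvex (T : Set X) : Prop :=
  ∀ ⦃E : Set X⦄ ⦃u v : X⦄, IsArc E u v → u ∈ T → v ∈ T → E ⊆ T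

theorem MaximalCyclic.arcConvex (hT : MaximalCyclic T) : ArcConvex T := by
  intro E u v hE hu hv p hpE
  by_contra hpT
  have huv : u ≠ v := by
    rintro rfl
    rw [hE.eq_singleton] at hpE
    exact hpT (hpE ▸ hu)
  obtain ⟨S, hST, hS, -⟩ := hT.2.1.exists_isArc_mem hu hv huv hu
  obtain ⟨G, -, c, hc, d, hd, hcd, hG, hpG, hGS⟩ :=
    hE.exists_excursion hS.isClosed hS.left_mem hS.right_mem hpE fun h => hpT (hST h)
  obtain ⟨R, hRS, hR⟩ := hS.exists_subarc hc hd
  have hJ : IsJordanCurve (G ∪ R) :=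
    hG.isJordanCurve hR hcd (hGS ▸ inter_subset_inter_right G hRS)
  have hmax : T ∪ (G ∪ R) = T := hT.2.2 _ (hT.2.1.union_isJordanCurve hJ
    ⟨c, ⟨hST hc, Or.inl hG.left_mem⟩, d, ⟨hST hd, Or.inl hG.right_mem⟩, hcd⟩) subset_union_left
  exact hpT (hmax ▸ Or.inr (Or.inl hpG))

theorem CyclicallyConnected.exists_disjoint_arcs (hT : CyclicallyConnected T) (hN : IsClosed N)
    (hTN : (T ∩ N).Nontrivial) (ha : a ∈ T) (hb : b ∈ T) (hab : a ≠ b) :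
    ∃ a' b', ∃ A ⊆ T, ∃ B ⊆ T, IsArc A a a' ∧ IsArc B b b' ∧ A ∩ N = {a'} ∧ B ∩ N = {b'} ∧
      Disjoint A B := by
  obtain ⟨w, ⟨hwT, hwN⟩⟩ := hTN.nonempty
  obtain ⟨E, hET, hE, hwE⟩ := hT.exists_isArc_mem ha hb hab hwT
  obtain ⟨c, hcN, A, A', hA, hA', rfl, hAA', hAN⟩ := hE.exists_firstHit hN ⟨w, hwE, hwN⟩
  obtain ⟨d, hdN, B, B', hB, hB', rfl, -, hBN⟩ :=
    hA'.symm.exists_firstHit hN ⟨c, hA'.left_mem, hcN⟩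
  have hAT : A ⊆ T := subset_union_left.trans hET
  have hBT : B ⊆ T := subset_union_left.trans (subset_union_right.trans hET)
  have hABc : A ∩ B ⊆ {c} := hAA' ▸ inter_subset_inter_right A subset_union_left
  rcases ne_or_eq c d with hcd | rfl
  · refine ⟨c, d, A, hAT, B, hBT, hA, hB, hAN, hBN, disjoint_left.2 fun x hxA hxB => ?_⟩
    obtain rfl : x = c := hABc ⟨hxA, hxB⟩
    exact hcd (hBN.subset ⟨hxB, hcN⟩)
  have hAB : A ∩ B = {c} :=
    hABc.antisymm (singleton_subset_iff.2 ⟨hA.right_mem, hB.right_mem⟩)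
  obtain ⟨q, ⟨hqT, hqN⟩, hqc⟩ := hTN.exists_ne c
  obtain ⟨s, hs, hsc⟩ : ∃ s ∈ A ∪ B, s ≠ c := by
    rcases ne_or_eq a c with h | rfl
    · exact ⟨a, Or.inl hA.left_mem, h⟩
    · exact ⟨b, Or.inr hB.left_mem, hab.symm⟩
  obtain ⟨D₀, hD₀T, hD₀, hcD₀⟩ :=
    hT.exists_isArc_notMem hqT (union_subset hAT hBT hs) hqc hsc
  obtain ⟨e, heAB, D, D', hD, -, rfl, -, hDAB⟩ := hD₀.exists_firstHit
    (hA.isClosed.union hB.isClosed) ⟨s, hD₀.right_mem, hs⟩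
  have hDT : D ⊆ T := subset_union_left.trans hD₀T
  have hec : e ≠ c := fun h => hcD₀ (Or.inl (h ▸ hD.right_mem))
  rcases heAB with heA | heB
  · obtain ⟨a', A', hA'AD, hA', hA'N, hdisj⟩ := hA.exists_detour hD.symm heA hec hAB hDAB hN hqN
    exact ⟨a', c, A', hA'AD.trans (union_subset hAT hDT), B, hBT, hA', hB, hA'N, hBN, hdisj⟩
  · obtain ⟨b', B', hB'BD, hB', hB'N, hdisj⟩ := hB.exists_detour hD.symm heB hec
      (inter_comm A B ▸ hAB) (union_comm A B ▸ hDAB) hN hqN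
    exact ⟨c, b', A, hAT, B', hB'BD.trans (union_subset hBT hDT), hA, hB', hAN, hB'N, hdisj.symm⟩

end CyclicallyConnected

/-! ### Chains of cyclicly connected sets -/

section Chain

theorem exists_seq_of_forall_exists {α : Type*} {P : ℕ → α → Prop} {r : ℕ → α → α → Prop}
    (h₀ : ∃ x, P 0 x) (h : ∀ n x, P n x → ∃ y, P (n + 1) y ∧ r n x y) :
    ∃ s : ℕ → α, (∀ n, P n (s n)) ∧ ∀ n, r n (s n) (s (n + 1)) := by
  obtain ⟨x₀, hx₀⟩ := h₀
  choose! f hfP hfr using h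
  set s : ℕ → α := fun n => Nat.rec x₀ f n
  have hs : ∀ n, P n (s n) := fun n => Nat.rec hx₀ (fun n ih => hfP n _ ih) n
  exact ⟨s, hs, fun n => hfr n _ (hs n)⟩

section

variable {X : Type*} [TopologicalSpace X] {p : X}

theorem joinedIn_insert_of_tendsto {F : ℝ → X} {S : Set X} (hF : ContinuousOn F (Ici 0))
    (hFS : MapsTo F (Ici 0) S) (hp : Tendsto F atTop (𝓝 p)) : JoinedIn (insert p S) (F 0) p := by
  set φ : ℝ → ℝ := fun s => (1 - s)⁻¹ - 1
  have hφ : ContinuousOn φ (Ico 0 1) :=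
    (ContinuousOn.inv₀ (by fun_prop) fun s hs => (sub_pos.2 hs.2).ne').sub continuousOn_const
  have hmaps : MapsTo φ (Ico 0 1) (Ici 0) := fun s hs =>
    sub_nonneg.2 ((one_le_inv₀ (sub_pos.2 hs.2)).2 (sub_le_self 1 hs.1))
  have hsub : Tendsto (fun s : ℝ => 1 - s) (𝓝[Ico 0 1] 1) (𝓝[>] 0) := by
    refine tendsto_nhdsWithin_iff.2 ⟨?_, eventually_nhdsWithin_of_forall fun s hs => sub_pos.2 hs.2⟩
    exact ((continuous_sub_left 1).tendsto' 1 0 (sub_self 1)).mono_left nhdsWithin_le_nhds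
  have hφtop : Tendsto φ (𝓝[Ico 0 1] 1) atTop :=
    tendsto_atTop_add_const_right _ _ (tendsto_inv_nhdsGT_zero.comp hsub)
  refine JoinedIn.ofLine (f := Function.update (F ∘ φ) 1 p) ?_ ?_ (Function.update_self _ _ _) ?_
  · rw [continuousOn_update_iff, unitInterval, Icc_sdiff_right]
    exact ⟨hF.comp hφ hmaps, fun _ => hp.comp hφtop⟩
  · simp [φ]
  · rintro _ ⟨s, hs, rfl⟩
    rcases hs.2.eq_or_lt with rfl | hs1
    · exact Or.inl (Function.update_self _ _ _)
    · rw [Function.update_of_ne hs1.ne]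
      exact Or.inr (hFS (hmaps ⟨hs.1, hs1⟩))

theorem exists_continuous_of_forall_joinedIn {S : ℕ → Set X} {l : ℕ → X}
    (h : ∀ n, JoinedIn (S n) (l n) (l (n + 1))) :
    ∃ F : ℝ → X, Continuous F ∧ F 0 = l 0 ∧ ∀ t, F t ∈ S ⌊t⌋₊ := by
  choose γ hγ using h
  set F : ℝ → X := fun t => (γ ⌊t⌋₊).extend (t - ⌊t⌋₊)
  have hFn : ∀ n : ℕ, EqOn F (fun t => (γ n).extend (t - n)) (Icc n (n + 1)) := by
    intro n t ht
    rcases ht.2.eq_or_lt with rfl | hlt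
    · simp [F, Nat.floor_add_one]
    · have hfloor : ⌊t⌋₊ = n := (Nat.floor_eq_iff (n.cast_nonneg.trans ht.1)).2 ⟨ht.1, hlt⟩
      simp only [F]
      rw [hfloor]
  have hF0 : EqOn F (fun _ => l 0) (Iic 0) := by
    intro t ht
    simp only [F]
    rw [Nat.floor_of_nonpos (mem_Iic.1 ht), Nat.cast_zero, sub_zero]
    exact (γ 0).extend_of_le_zero ht
  have hFIic : ∀ n : ℕ, ContinuousOn F (Iic n) := by
    intro n
    induction n with
    | zero => exact continuousOn_const.congr (Nat.cast_zero (R := ℝ) ▸ hF0)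
    | succ n ih =>
      rw [Nat.cast_succ, ← Iic_union_Icc_eq_Iic (le_add_of_nonneg_right zero_le_one)]
      exact ih.union_of_isClosed (((γ n).continuous_extend.comp
        (continuous_sub_right _)).continuousOn.congr (hFn n)) isClosed_Iic isClosed_Icc
  refine ⟨F, continuous_iff_continuousAt.2 fun t => (hFIic (⌊t⌋₊ + 1)).continuousAt
    (Iic_mem_nhds (by exact_mod_cast Nat.lt_floor_add_one t)), hF0 self_mem_Iic, fun t => ?_⟩
  obtain ⟨u, hu⟩ : F t ∈ range (γ ⌊t⌋₊) := (γ ⌊t⌋₊).extend_range ▸ mem_range_self _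
  exact hu ▸ hγ _ u

theorem joinedIn_insert_iUnion {S : ℕ → Set X} {l : ℕ → X}
    (h : ∀ n, JoinedIn (S n) (l n) (l (n + 1))) (hS : Tendsto S atTop (𝓝 p).smallSets) :
    JoinedIn (insert p (⋃ n, S n)) (l 0) p := by
  obtain ⟨F, hF, hF0, hFS⟩ := exists_continuous_of_forall_joinedIn h
  refine hF0 ▸ joinedIn_insert_of_tendsto hF.continuousOn
    (fun t _ => mem_iUnion.2 ⟨_, hFS t⟩) (tendsto_def.2 fun W hW => ?_)
  filter_upwards [tendsto_nat_floor_atTop.eventually (tendsto_smallSets_iff.1 hS W hW)] with t ht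
  exact ht (hFS t)

end

variable {X : Type} {Q A B : ℕ → Set X} {a b : ℕ → X} {p : X}

theorem disjoint_iUnion_of_crossing (hAQ : ∀ n, A n ⊆ Q n) (hBQ : ∀ n, B n ⊆ Q n)
    (hA : ∀ n, A n ∩ Q (n + 1) ⊆ A (n + 1)) (hB : ∀ n, B n ∩ Q (n + 1) ⊆ B (n + 1))
    (hAB : ∀ n, Disjoint (A n) (B n)) (hQ : ∀ m n, m + 2 ≤ n → Disjoint (Q m) (Q n)) :
    Disjoint (⋃ n, A n) (⋃ n, B n) := by
  refine disjoint_iUnion_left.2 fun m => disjoint_iUnion_right.2 fun n => ?_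
  rcases lt_trichotomy m n with hmn | rfl | hmn
  · rcases (Nat.succ_le_of_lt hmn).eq_or_lt with rfl | h
    · exact disjoint_left.2 fun x hxA hxB => disjoint_left.1 (hAB _) (hA m ⟨hxA, hBQ _ hxB⟩) hxB
    · exact (hQ m n h).mono (hAQ m) (hBQ n)
  · exact hAB m
  · rcases (Nat.succ_le_of_lt hmn).eq_or_lt with rfl | h
    · exact disjoint_left.2 fun x hxA hxB => disjoint_left.1 (hAB _) hxA (hB n ⟨hxB, hAQ _ hxA⟩)
    · exact (hQ n m h).symm.mono (hAQ m) (hBQ n)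

theorem exists_disjoint_arc_chains [TopologicalSpace X] [T2Space X]
    (hQ : ∀ n, CyclicallyConnected (Q n)) (hQc : ∀ n, IsClosed (Q n))
    (hQQ : ∀ n, (Q n ∩ Q (n + 1)).Nontrivial) (hQd : ∀ m n, m + 2 ≤ n → Disjoint (Q m) (Q n)) :
    ∃ (a b : ℕ → X) (A B : ℕ → Set X), (∀ n, A n ⊆ Q n) ∧ (∀ n, B n ⊆ Q n) ∧
      (∀ n, IsArc (A n) (a n) (a (n + 1))) ∧ (∀ n, IsArc (B n) (b n) (b (n + 1))) ∧
      Disjoint (⋃ n, A n) (⋃ n, B n) := by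
  obtain ⟨a₀, ha₀, b₀, hb₀, hab₀⟩ := (hQQ 0).mono inter_subset_left
  obtain ⟨s, -, hs⟩ := exists_seq_of_forall_exists
    (P := fun n (s : X × X) => s.1 ∈ Q n ∧ s.2 ∈ Q n ∧ s.1 ≠ s.2)
    (r := fun n s s' => ∃ A ⊆ Q n, ∃ B ⊆ Q n, IsArc A s.1 s'.1 ∧ IsArc B s.2 s'.2 ∧
      A ∩ Q (n + 1) = {s'.1} ∧ B ∩ Q (n + 1) = {s'.2} ∧ Disjoint A B)
    ⟨(a₀, b₀), ha₀, hb₀, hab₀⟩ <| by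
      rintro n ⟨a, b⟩ ⟨ha, hb, hab⟩
      obtain ⟨a', b', A, hAQ, B, hBQ, hA, hB, hAa, hBb, hAB⟩ :=
        (hQ n).exists_disjoint_arcs (hQc (n + 1)) (hQQ n) ha hb hab
      exact ⟨(a', b'), ⟨(hAa.symm.subset rfl).2, (hBb.symm.subset rfl).2,
        disjoint_iff_forall_ne.1 hAB hA.right_mem hB.right_mem⟩, A, hAQ, B, hBQ, hA, hB, hAa, hBb,
        hAB⟩
  choose A hAQ B hBQ hA hB hAa hBb hAB using hs
  refine ⟨fun n => (s n).1, fun n => (s n).2, A, B, hAQ, hBQ, hA, hB,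
    disjoint_iUnion_of_crossing hAQ hBQ (fun n => ?_) (fun n => ?_) hAB hQd⟩
  · exact hAa n ▸ singleton_subset_iff.2 (hA (n + 1)).left_mem
  · exact hBb n ▸ singleton_subset_iff.2 (hB (n + 1)).left_mem

theorem exists_isArc_mem_of_chain [MetricSpace X] (hQ : ∀ n, CyclicallyConnected (Q n))
    (hQc : ∀ n, IsClosed (Q n)) (hQQ : ∀ n, (Q n ∩ Q (n + 1)).Nontrivial)
    (hQd : ∀ m n, m + 2 ≤ n → Disjoint (Q m) (Q n)) (hQp : Tendsto Q atTop (𝓝 p).smallSets) :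
    ∃ a ∈ Q 0, ∃ b ∈ Q 0, ∃ S, IsArc S a b ∧ p ∈ S := by
  obtain ⟨a, b, A, B, hAQ, hBQ, hA, hB, hAB⟩ := exists_disjoint_arc_chains hQ hQc hQQ hQd
  obtain ⟨S, hSA, hS⟩ := exists_isArc_of_joinedIn <| joinedIn_insert_iUnion
    (fun n => (hA n).joinedIn) (hQp.smallSets_mono <| Eventually.of_forall hAQ)
  obtain ⟨S', hSB, hS'⟩ := exists_isArc_of_joinedIn <| joinedIn_insert_iUnion
    (fun n => (hB n).joinedIn) (hQp.smallSets_mono <| Eventually.of_forall hBQ)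
  refine ⟨a 0, hAQ 0 (hA 0).left_mem, b 0, hBQ 0 (hB 0).left_mem, S ∪ S', hS.trans hS'.symm ?_,
    Or.inl hS.right_mem⟩
  rintro x ⟨hx, hx'⟩
  rcases hSA hx with rfl | hxA
  · rfl
  rcases hSB hx' with rfl | hxB
  · rfl
  exact (disjoint_left.1 hAB hxA hxB).elim

end Chain

/-! ### Closedness of maximal cyclic sets -/

section Escape

variable {X : Type} [MetricSpace X] {T U V A : Set X} {p t u x y a₀ t₀ : X}

theorem IsArc.right_mem_closure (hA : IsArc A x y) (hxy : x ≠ y) : y ∈ closure (A \ {y}) := by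
  have hacc : AccPt y (𝓟 A) :=
    hA.isPathConnected.isConnected.isPreconnected.preperfect_of_nontrivial
      ⟨x, hA.left_mem, y, hA.right_mem, hxy⟩ y hA.right_mem
  rwa [accPt_principal_iff_clusterPt, ← mem_closure_iff_clusterPt] at hacc

theorem CyclicallyConnected.exists_mem_frontier_joinedIn (hT : CyclicallyConnected T)
    (hU : IsOpen U) (hu : u ∈ T ∩ U) (ha₀ : a₀ ∈ T \ U) (hux : u ≠ x) (hax : a₀ ≠ x) :
    ∃ y ∈ frontier U ∩ T, JoinedIn (closure U \ {x}) u y := by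
  obtain ⟨S, hST, hS, hxS⟩ := hT.exists_isArc_notMem hu.1 ha₀.1 hux hax
  obtain ⟨y, hyU, S₁, S₂, hS₁, -, hS₁₂, -, hS₁U⟩ :=
    hS.exists_firstHit hU.isClosed_compl ⟨a₀, hS.right_mem, ha₀.2⟩
  have hS₁S : S₁ ⊆ S := hS₁₂ ▸ subset_union_left
  have hsub : S₁ \ {y} ⊆ U := fun z hz => by_contra fun hzU => hz.2 (hS₁U.subset ⟨hz.1, hzU⟩)
  have hy : y ∈ closure U :=
    closure_mono hsub (hS₁.right_mem_closure fun h => hyU (h ▸ hu.2))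
  have hS₁cl : S₁ ⊆ closure U := fun z hz => by
    by_cases hzy : z = y
    · exact hzy ▸ hy
    · exact subset_closure (hsub ⟨hz, hzy⟩)
  exact ⟨y, ⟨hU.frontier_eq ▸ ⟨hy, hyU⟩, hST (hS₁S hS₁.right_mem)⟩,
    hS₁.joinedIn.mono fun z hz => ⟨hS₁cl hz, fun hzx => hxS (hzx ▸ hS₁S hz)⟩⟩

variable [LocallyPathConnectedSpace X]

theorem exists_isArc_of_mem_closure (hp : p ∈ closure T) (hV : V ∈ 𝓝 p) :
    ∃ t ∈ T, ∃ A ⊆ V, IsArc A t p := by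
  obtain ⟨t, hpt, ht⟩ := mem_closure_iff_nhds.1 hp _ (pathComponentIn_mem_nhds hV)
  obtain ⟨A, hAV, hA⟩ := exists_isArc_of_joinedIn (JoinedIn.symm hpt)
  exact ⟨t, ht, A, hAV, hA⟩

theorem ArcConvex.sdiff_singleton_subset (hT : ArcConvex T) (hp : p ∈ closure T)
    (hA : IsArc A t p) (ht : t ∈ T) : A \ {p} ⊆ T := by
  rintro z ⟨hzA, hzp⟩
  obtain ⟨A₁, A₂, hA₁, hA₂, rfl, hA₁₂⟩ := hA.split hzA
  have hpA₁ : p ∉ A₁ := fun h => hzp (hA₁₂.subset ⟨h, hA₂.right_mem⟩).symm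
  obtain ⟨s, hs, D, hDA₁, hD⟩ :=
    exists_isArc_of_mem_closure hp (hA₁.isClosed.isOpen_compl.mem_nhds hpA₁)
  obtain ⟨h, hhA₂, D₁, D₂, hD₁, -, rfl, -, hD₁A₂⟩ :=
    hD.exists_firstHit hA₂.isClosed ⟨p, hD.right_mem, hA₂.right_mem⟩
  obtain ⟨A₃, A₄, hA₃, -, rfl, -⟩ := hA₂.split hhA₂
  have hA₁₃ : IsArc (A₁ ∪ A₃) t h :=
    hA₁.trans hA₃ fun x hx => hA₁₂.subset ⟨hx.1, Or.inl hx.2⟩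
  refine hT (hA₁₃.trans hD₁.symm ?_) ht hs (Or.inl (Or.inl hA₁.right_mem))
  rintro x ⟨hxA₁ | hxA₃, hxD⟩
  · exact absurd hxA₁ (hDA₁ (Or.inl hxD))
  · exact hD₁A₂.subset ⟨hxD, Or.inl hxA₃⟩

theorem ArcConvex.eventually_joinedIn (hT : ArcConvex T) (hV : IsOpen V)
    (hVc : IsPathConnected V) (ht₀ : t₀ ∈ T ∩ V) (hp : p ∉ T) (hy : y ∈ closure T) (hyV : y ∈ V)
    (hyp : y ≠ p) : ∀ᶠ z : X × X in 𝓝 (p, y), JoinedIn (V \ {z.1}) z.2 t₀ := by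
  obtain ⟨N, P, hN, hP, hNP⟩ := t2_separation_nhds hyp
  have hN' : pathComponentIn (N ∩ V) y ∈ 𝓝 y :=
    pathComponentIn_mem_nhds (inter_mem hN (hV.mem_nhds hyV))
  obtain ⟨t, hyt, ht⟩ := mem_closure_iff_nhds.1 hy _ hN'
  obtain ⟨E, hEV, hE⟩ := exists_isArc_of_joinedIn (hVc.joinedIn t hyt.target_mem.2 t₀ ht₀.2)
  have hpE : p ∉ E := fun h => hp (hT hE ht ht₀.1 h)
  filter_upwards [prod_mem_nhds (inter_mem hP (hE.isClosed.isOpen_compl.mem_nhds hpE)) hN']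
    with ⟨x, z⟩ ⟨hx, hyz⟩
  have hNx : N ∩ V ⊆ V \ {x} := fun w hw =>
    ⟨hw.2, fun hwx => disjoint_left.1 hNP hw.1 (mem_singleton_iff.1 hwx ▸ hx.1)⟩
  have hEx : E ⊆ V \ {x} := fun w hw => ⟨hEV hw, fun hwx => hx.2 (mem_singleton_iff.1 hwx ▸ hw)⟩
  exact ((hyz.symm.trans hyt).mono hNx).trans (hE.joinedIn.mono hEx)

theorem ArcConvex.exists_nhds_joinedIn [LocallyCompactSpace X] (hT : ArcConvex T)
    (hTc : CyclicallyConnected T) (hp : p ∈ closure T) (hpT : p ∉ T) (hV : V ∈ 𝓝 p) :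
    ∃ W ∈ 𝓝 p, ∀ x ∈ W, ∀ u ∈ T ∩ W, ∀ v ∈ T ∩ W, u ≠ x → v ≠ x → JoinedIn (V \ {x}) u v := by
  obtain ⟨a₀, ha₀⟩ := closure_nonempty_iff.1 ⟨p, hp⟩
  obtain ⟨V₀, ⟨hV₀, hpV₀, hV₀c⟩, hV₀V⟩ := (isOpen_isPathConnected_basis p).mem_iff.1
    (inter_mem hV (isOpen_ne.mem_nhds (ne_of_mem_of_not_mem ha₀ hpT).symm))
  obtain ⟨U, hU, hpU, hUV₀, hUc⟩ := exists_open_between_and_isCompact_closure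
    isCompact_singleton hV₀ (singleton_subset_iff.2 hpV₀)
  rw [singleton_subset_iff] at hpU
  obtain ⟨t₀, ht₀V₀, ht₀⟩ := mem_closure_iff_nhds.1 hp V₀ (hV₀.mem_nhds hpV₀)
  have hF : IsCompact (frontier U ∩ closure T) :=
    hUc.of_isClosed_subset (isClosed_frontier.inter isClosed_closure)
      (inter_subset_left.trans frontier_subset_closure)
  have hgood : ∀ᶠ x in 𝓝 p, ∀ y ∈ frontier U ∩ closure T, JoinedIn (V₀ \ {x}) y t₀ :=
    hF.eventually_forall_of_forall_eventually fun y hy =>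
      hT.eventually_joinedIn hV₀ hV₀c ⟨ht₀, ht₀V₀⟩ hpT hy.2
        (hUV₀ (frontier_subset_closure hy.1))
        (ne_of_mem_of_not_mem hpU (hU.frontier_eq ▸ hy.1).2).symm
  have ha₀V₀ : a₀ ∉ V₀ := fun h => (hV₀V h).2 rfl
  have hUV : U ⊆ V₀ := subset_closure.trans hUV₀
  refine ⟨_, inter_mem (hU.mem_nhds hpU) hgood, ?_⟩
  rintro x ⟨hxU, hx⟩
  have hjoin : ∀ u ∈ T ∩ U, u ≠ x → JoinedIn (V₀ \ {x}) u t₀ := by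
    intro u hu hux
    obtain ⟨y, hy, huy⟩ := hTc.exists_mem_frontier_joinedIn hU hu ⟨ha₀, fun h => ha₀V₀ (hUV h)⟩ hux
      (ne_of_mem_of_not_mem (hUV hxU) ha₀V₀).symm
    exact (huy.mono (sdiff_subset_sdiff_left hUV₀)).trans (hx y ⟨hy.1, subset_closure hy.2⟩)
  intro u hu v hv hux hvx
  exact ((hjoin u ⟨hu.1, hu.2.1⟩ hux).trans (hjoin v ⟨hv.1, hv.2.1⟩ hvx).symm).mono
    (sdiff_subset_sdiff_left fun z hz => (hV₀V hz).1)

end Escape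

section Closed

variable {X : Type} {T V E : Set X} {γ : ℝ → X} {a b s t u v : ℝ} {p : X}

theorem exists_isJordanCurve_of_bypass [TopologicalSpace X] [T2Space X]
    (hc : ContinuousOn γ (Icc a b)) (hi : InjOn γ (Icc a b)) (hu : u ∈ Icc a s) (hv : v ∈ Icc s b)
    (hE : IsArc E (γ u) (γ v)) (hs : γ s ∉ E) :
    ∃ c ∈ Ico a s, ∃ d ∈ Ioc s b, γ c ∈ E ∧ γ d ∈ E ∧
      ∃ E' ⊆ E, IsJordanCurve (E' ∪ γ '' Icc c d) := by
  have hsI : s ∈ Icc a b := ⟨hu.1.trans hu.2, hv.1.trans hv.2⟩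
  obtain ⟨-, ⟨c, hcs, rfl⟩, E₁, E₂, hE₁, -, rfl, -, hE₁C⟩ := hE.symm.exists_firstHit
    (isArc_image hc hi le_rfl hsI.1 hsI.2).isClosed ⟨γ u, hE.left_mem, mem_image_of_mem γ hu⟩
  obtain ⟨-, ⟨d, hds, rfl⟩, E₃, E₄, hE₃, -, rfl, -, hE₃C⟩ := hE₁.symm.exists_firstHit
    (isArc_image hc hi hsI.1 hsI.2 le_rfl).isClosed ⟨γ v, hE₁.left_mem, mem_image_of_mem γ hv⟩
  have hsc : c ≠ s := fun h => hs (h ▸ Or.inl (Or.inl hE₃.left_mem))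
  have hsd : s ≠ d := fun h => hs (h ▸ Or.inl (Or.inl hE₃.right_mem))
  have hcd : c < d := (hcs.2.lt_of_ne hsc).trans_le hds.1
  refine ⟨c, ⟨hcs.1, hcs.2.lt_of_ne hsc⟩, d, ⟨hds.1.lt_of_ne hsd, hds.2⟩,
    Or.inl (Or.inl hE₃.left_mem), Or.inl (Or.inl hE₃.right_mem), E₃,
    subset_union_left.trans subset_union_left,
    hE₃.isJordanCurve (isArc_image hc hi hcs.1 hcd.le hds.2) ?_ ?_⟩
  · exact fun h => hcd.ne (hi ⟨hcs.1, hcs.2.trans hsI.2⟩ ⟨hsI.1.trans hds.1, hds.2⟩ h)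
  · rintro _ ⟨hx, w, hw, rfl⟩
    rcases le_total w s with hws | hsw
    · exact Or.inl (hE₁C.subset ⟨Or.inl hx, mem_image_of_mem γ ⟨hcs.1.trans hw.1, hws⟩⟩)
    · exact Or.inr (hE₃C.subset ⟨hx, mem_image_of_mem γ ⟨hsw, hw.2.trans hds.2⟩⟩)

theorem ArcConvex.exists_isJordanCurve_of_joinedIn [MetricSpace X] (hT : ArcConvex T)
    (hb : γ b ∉ T) (hc : ContinuousOn γ (Icc a b)) (hi : InjOn γ (Icc a b))
    (hγT : MapsTo γ (Ico a b) T) (hu : u ∈ Ico a s) (hv : v ∈ Ioo s b)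
    (hV : ∀ w ∈ Icc a t, γ w ∉ V) (huv : JoinedIn (V \ {γ s}) (γ u) (γ v)) :
    ∃ J ⊆ (V ∪ γ '' Ioo t b) ∩ T, IsJordanCurve J ∧ γ ⁻¹' J ∈ 𝓝 s := by
  obtain ⟨E, hEV, hE⟩ := exists_isArc_of_joinedIn huv
  have hET : E ⊆ T := hT hE (hγT ⟨hu.1, hu.2.trans (hv.1.trans hv.2)⟩)
    (hγT ⟨hu.1.trans (hu.2.trans hv.1).le, hv.2⟩)
  obtain ⟨c, hc', d, hd, hcE, hdE, E', hE', hJ⟩ := exists_isJordanCurve_of_bypass hc hi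
    (Ico_subset_Icc_self hu) ⟨hv.1.le, hv.2.le⟩ hE fun h => (hEV h).2 rfl
  have htc : t < c := not_le.1 fun h => hV c ⟨hc'.1, h⟩ (hEV hcE).1
  have hdb : d < b := hd.2.lt_of_ne fun h => hb (h ▸ hET hdE)
  refine ⟨_, union_subset (fun x hx => ⟨Or.inl (hEV (hE' hx)).1, hET (hE' hx)⟩) ?_, hJ,
    mem_of_superset (Icc_mem_nhds hc'.2 hd.1) fun w hw => Or.inr (mem_image_of_mem γ hw)⟩
  rintro _ ⟨w, hw, rfl⟩
  have hwb : w < b := hw.2.trans_lt hdb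
  exact ⟨Or.inr (mem_image_of_mem γ ⟨htc.trans_le hw.1, hwb⟩), hγT ⟨hc'.1.trans hw.1, hwb⟩⟩

theorem ArcConvex.eventually_exists_isJordanCurve [MetricSpace X] [LocallyCompactSpace X]
    [LocallyPathConnectedSpace X] (hT : ArcConvex T) (hTc : CyclicallyConnected T)
    (hb : γ b ∈ closure T \ T) (hab : a < b) (hc : ContinuousOn γ (Icc a b))
    (hi : InjOn γ (Icc a b)) (hγT : MapsTo γ (Ico a b) T) (hV : V ∈ 𝓝 (γ b)) :
    ∀ᶠ s in 𝓝[<] b, ∃ J ⊆ V ∩ T, IsJordanCurve J ∧ γ ⁻¹' J ∈ 𝓝 s := by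
  have hlim : Tendsto γ (𝓝[<] b) (𝓝 (γ b)) := nhdsWithin_Ico_eq_nhdsLT hab ▸
    ((hc b (right_mem_Icc.2 hab.le)).mono Ico_subset_Icc_self).tendsto
  obtain ⟨t, ht, htV⟩ := (mem_nhdsLT_iff_exists_mem_Ico_Ioo_subset hab).1 (hlim hV)
  have hbK : γ b ∉ γ '' Icc a t := by
    rintro ⟨w, hw, hwb⟩
    have hwb' : w < b := hw.2.trans_lt ht.2
    exact hwb'.ne (hi ⟨hw.1, hwb'.le⟩ (right_mem_Icc.2 hab.le) hwb)
  have hK : IsClosed (γ '' Icc a t) := (isArc_image hc hi le_rfl ht.1 ht.2.le).isClosed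
  obtain ⟨W, hW, hWjoin⟩ :=
    hT.exists_nhds_joinedIn hTc hb.1 hb.2 (inter_mem hV (hK.isOpen_compl.mem_nhds hbK))
  obtain ⟨q, hq, hqW⟩ := (mem_nhdsLT_iff_exists_mem_Ico_Ioo_subset hab).1 (hlim hW)
  filter_upwards [Ioo_mem_nhdsLT hq.2] with s hs
  obtain ⟨u, hqu, hus⟩ := exists_between hs.1
  obtain ⟨v, hsv, hvb⟩ := exists_between hs.2
  have hI : ∀ w ∈ Ioo q b, w ∈ Ico a b := fun w hw => ⟨hq.1.trans hw.1.le, hw.2⟩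
  have hmem : ∀ w ∈ Ioo q b, γ w ∈ T ∩ W := fun w hw => ⟨hγT (hI w hw), hqW hw⟩
  have hinj : ∀ w ∈ Ioo q b, w ≠ s → γ w ≠ γ s := fun w hw =>
    mt (hi (Ico_subset_Icc_self (hI w hw)) (Ico_subset_Icc_self (hI s hs)))
  have hu : u ∈ Ioo q b := ⟨hqu, hus.trans hs.2⟩
  have hv : v ∈ Ioo q b := ⟨hs.1.trans hsv, hvb⟩
  have huv := hWjoin (γ s) (hmem s hs).2 (γ u) (hmem u hu) (γ v) (hmem v hv) (hinj u hu hus.ne)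
    (hinj v hv hsv.ne')
  obtain ⟨J, hJ, hJs⟩ := hT.exists_isJordanCurve_of_joinedIn hb.2 hc hi hγT ⟨(hI u hu).1, hus⟩
    ⟨hsv, hvb⟩ (fun w hw h => h.2 (mem_image_of_mem γ hw)) huv
  exact ⟨J, hJ.trans (inter_subset_inter_left T (union_subset inter_subset_left
    (image_subset_iff.2 htV))), hJs⟩

/-- `CyclicLink γ V s t` says that some compact cyclicly connected subset of `V` contains the
images under the curve `γ` of neighbourhoods of both parameters `s` and `t`. -/
def CyclicLink [TopologicalSpace X] (γ : ℝ → X) (V : Set X) (s t : ℝ) : Prop :=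
  ∃ Q ⊆ V, IsCompact Q ∧ CyclicallyConnected Q ∧ γ ⁻¹' Q ∈ 𝓝 s ∧ γ ⁻¹' Q ∈ 𝓝 t

theorem nontrivial_inter_of_preimage_mem_nhds {P Q : Set X} {I : Set ℝ} (hi : InjOn γ I)
    (hI : I ∈ 𝓝 s) (hP : γ ⁻¹' P ∈ 𝓝 s) (hQ : γ ⁻¹' Q ∈ 𝓝 s) : (P ∩ Q).Nontrivial := by
  have hN : (γ ⁻¹' P ∩ γ ⁻¹' Q ∩ I).Nontrivial :=
    (infinite_of_mem_nhds s (inter_mem (inter_mem hP hQ) hI)).nontrivial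
  exact (hN.image_of_injOn (hi.mono inter_subset_right)).mono
    (image_subset_iff.2 inter_subset_left)

theorem cyclicLink_of_isPreconnected [TopologicalSpace X] [T2Space X] {I : Set ℝ}
    (hI : IsPreconnected I) (hIo : IsOpen I) (hi : InjOn γ I)
    (hJ : ∀ s ∈ I, ∃ J ⊆ V, IsJordanCurve J ∧ γ ⁻¹' J ∈ 𝓝 s) (hs : s ∈ I) (ht : t ∈ I) :
    CyclicLink γ V s t := by
  refine hI.induction₂ (CyclicLink γ V) (fun s hs => ?_) ?_ ?_ hs ht
  · obtain ⟨J, hJV, hJc, hJs⟩ := hJ s hs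
    filter_upwards [nhdsWithin_le_nhds (eventually_mem_nhds_iff.2 hJs)] with t hJt
    exact ⟨J, hJV, hJc.isCompact, hJc.cyclicallyConnected, hJs, hJt⟩
  · rintro s t u - ht - ⟨P, hPV, hPc, hP, hPs, hPt⟩ ⟨Q, hQV, hQc, hQ, hQt, hQu⟩
    exact ⟨P ∪ Q, union_subset hPV hQV, hPc.union hQc,
      hP.union hQ (nontrivial_inter_of_preimage_mem_nhds hi (hIo.mem_nhds ht) hPt hQt),
      mem_of_superset hPs fun x hx => Or.inl hx, mem_of_superset hQu fun x hx => Or.inr hx⟩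
  · rintro s t - - ⟨Q, hQV, hQc, hQ, hQs, hQt⟩
    exact ⟨Q, hQV, hQc, hQ, hQt, hQs⟩

theorem ArcConvex.eventually_cyclicLink [MetricSpace X] [LocallyCompactSpace X]
    [LocallyPathConnectedSpace X] (hT : ArcConvex T) (hTc : CyclicallyConnected T)
    (hb : γ b ∈ closure T \ T) (hab : a < b) (hc : ContinuousOn γ (Icc a b))
    (hi : InjOn γ (Icc a b)) (hγT : MapsTo γ (Ico a b) T) (hV : V ∈ 𝓝 (γ b)) :
    ∀ᶠ s in 𝓝[<] b, ∀ᶠ t in 𝓝[<] b, CyclicLink γ (V ∩ T) s t := by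
  obtain ⟨q, hq, hqJ⟩ := (mem_nhdsLT_iff_exists_mem_Ico_Ioo_subset hab).1
    (hT.eventually_exists_isJordanCurve hTc hb hab hc hi hγT hV)
  have hIoo : Ioo q b ⊆ Icc a b := fun w hw => ⟨hq.1.trans hw.1.le, hw.2.le⟩
  filter_upwards [Ioo_mem_nhdsLT hq.2] with s hs
  filter_upwards [Ioo_mem_nhdsLT hq.2] with t ht
  exact cyclicLink_of_isPreconnected isPreconnected_Ioo isOpen_Ioo
    (hi.mono hIoo) (fun s hs => hqJ hs) hs ht

theorem exists_seq_of_eventually_cyclicLink [TopologicalSpace X] [T2Space X] {F : Filter ℝ}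
    [F.NeBot] {I : Set ℝ} (hp : p ∉ T) (hIo : IsOpen I) (hIF : I ∈ F) (hi : InjOn γ I)
    (hlink : ∀ V ∈ 𝓝 p, ∀ᶠ s in F, ∀ᶠ t in F, CyclicLink γ (V ∩ T) s t) {B : ℕ → Set X}
    (hB : ∀ n, B n ∈ 𝓝 p) :
    ∃ Q V : ℕ → Set X, (∀ n, Q n ⊆ T) ∧ (∀ n, CyclicallyConnected (Q n)) ∧
      (∀ n, IsClosed (Q n)) ∧ (∀ n, (Q n ∩ Q (n + 1)).Nontrivial) ∧
      (∀ n, Q (n + 1) ⊆ V n) ∧ ∀ n, V (n + 1) ⊆ V n ∩ (Q n)ᶜ ∩ B n := by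
  have hnext : ∀ V, ∀ V' ∈ 𝓝 p, ∀ s, (∀ᶠ t in F, CyclicLink γ (V ∩ T) s t) →
      ∃ t ∈ I, CyclicLink γ (V ∩ T) s t ∧ ∀ᶠ u in F, CyclicLink γ (V' ∩ T) t u :=
    fun V V' hV' s hs => ((eventually_mem_set.2 hIF).and (hs.and (hlink V' hV'))).exists
  obtain ⟨σ, hσ, hσr⟩ := exists_seq_of_forall_exists
    (P := fun _ (σ : Set X × Set X × ℝ) => (σ.1 ⊆ T ∧ CyclicallyConnected σ.1 ∧ IsClosed σ.1) ∧
      σ.2.1 ∈ 𝓝 p ∧ (σ.2.2 ∈ I ∧ γ ⁻¹' σ.1 ∈ 𝓝 σ.2.2) ∧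
      ∀ᶠ t in F, CyclicLink γ (σ.2.1 ∩ T) σ.2.2 t)
    (r := fun n σ τ => τ.1 ⊆ σ.2.1 ∧ τ.2.1 ⊆ σ.2.1 ∩ σ.1ᶜ ∩ B n ∧ γ ⁻¹' τ.1 ∈ 𝓝 σ.2.2) (by
      obtain ⟨s, hs⟩ := (hlink univ univ_mem).exists
      obtain ⟨t, htI, ⟨Q, hQT, hQc, hQ, -, hQt⟩, ht⟩ := hnext univ univ univ_mem s hs
      exact ⟨(Q, univ, t), ⟨hQT.trans inter_subset_right, hQ, hQc.isClosed⟩, univ_mem,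
        ⟨htI, hQt⟩, ht⟩) (by
      rintro n ⟨P, V, s⟩ ⟨⟨hPT, -, hPc⟩, hV, -, hs⟩
      have hV' : V ∩ Pᶜ ∩ B n ∈ 𝓝 p :=
        inter_mem (inter_mem hV (hPc.isOpen_compl.mem_nhds fun h => hp (hPT h))) (hB n)
      obtain ⟨t, htI, ⟨Q, hQVT, hQc, hQ, hQs, hQt⟩, ht⟩ := hnext V _ hV' s hs
      exact ⟨(Q, _, t), ⟨⟨hQVT.trans inter_subset_right, hQ, hQc.isClosed⟩, hV', ⟨htI, hQt⟩, ht⟩,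
        hQVT.trans inter_subset_left, Subset.rfl, hQs⟩)
  exact ⟨fun n => (σ n).1, fun n => (σ n).2.1, fun n => (hσ n).1.1, fun n => (hσ n).1.2.1,
    fun n => (hσ n).1.2.2, fun n => nontrivial_inter_of_preimage_mem_nhds hi
      (hIo.mem_nhds (hσ n).2.2.1.1) (hσ n).2.2.1.2 (hσr n).2.2, fun n => (hσr n).1,
    fun n => (hσr n).2.1⟩

theorem exists_chain_of_eventually_cyclicLink [TopologicalSpace X] [T2Space X]
    [FirstCountableTopology X] {F : Filter ℝ} [F.NeBot] {I : Set ℝ} (hp : p ∉ T)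
    (hIo : IsOpen I) (hIF : I ∈ F) (hi : InjOn γ I)
    (hlink : ∀ V ∈ 𝓝 p, ∀ᶠ s in F, ∀ᶠ t in F, CyclicLink γ (V ∩ T) s t) :
    ∃ Q : ℕ → Set X, (∀ n, Q n ⊆ T) ∧ (∀ n, CyclicallyConnected (Q n)) ∧ (∀ n, IsClosed (Q n)) ∧
      (∀ n, (Q n ∩ Q (n + 1)).Nontrivial) ∧ (∀ m n, m + 2 ≤ n → Disjoint (Q m) (Q n)) ∧
      Tendsto Q atTop (𝓝 p).smallSets := by
  obtain ⟨B, hB⟩ := (𝓝 p).exists_antitone_basis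
  obtain ⟨Q, V, hQT, hQ, hQc, hQQ, hQV, hV⟩ :=
    exists_seq_of_eventually_cyclicLink hp hIo hIF hi hlink hB.mem
  have hanti : Antitone V :=
    antitone_nat_of_succ_le fun n => (hV n).trans (inter_subset_left.trans inter_subset_left)
  refine ⟨Q, hQT, hQ, hQc, hQQ, fun m n hmn => ?_, ?_⟩
  · obtain ⟨k, rfl⟩ := Nat.exists_eq_add_of_le hmn
    have hsub : Q (m + 2 + k) ⊆ V (m + 1) := by
      rw [show m + 2 + k = m + 1 + k + 1 by omega]
      exact (hQV _).trans (hanti (Nat.le_add_right _ k))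
    exact disjoint_left.2 fun x hx hx' => (hV m (hsub hx')).1.2 hx
  · rw [← tendsto_add_atTop_iff_nat 2]
    exact hB.tendsto_smallSets.smallSets_mono
      (Eventually.of_forall fun n => (hQV (n + 1)).trans ((hV n).trans inter_subset_right))

theorem CyclicallyConnected.isClosed_of_arcConvex [MetricSpace X] [LocallyCompactSpace X]
    [LocallyPathConnectedSpace X] (hTc : CyclicallyConnected T) (hT : ArcConvex T) :
    IsClosed T := by
  refine isClosed_of_closure_subset fun p hp => by_contra fun hpT => ?_
  obtain ⟨t, ht, A, -, hA⟩ := exists_isArc_of_mem_closure hp univ_mem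
  have hAT : A \ {p} ⊆ T := hT.sdiff_singleton_subset hp hA ht
  obtain ⟨a, b, γ, hab, hc, hi, rfl, rfl, rfl⟩ := hA
  have hlt : a < b := hab.lt_of_ne fun h => hpT (h ▸ ht)
  have hγT : MapsTo γ (Ico a b) T := fun s hs => hAT ⟨mem_image_of_mem γ (Ico_subset_Icc_self hs),
    fun h => hs.2.ne (hi (Ico_subset_Icc_self hs) (right_mem_Icc.2 hab) h)⟩
  obtain ⟨Q, hQT, hQ, hQc, hQQ, hQd, hQp⟩ := exists_chain_of_eventually_cyclicLink hpT isOpen_Ioo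
    (Ioo_mem_nhdsLT hlt) (hi.mono Ioo_subset_Icc_self) fun V hV =>
      hT.eventually_cyclicLink hTc ⟨hp, hpT⟩ hlt hc hi hγT hV
  obtain ⟨x, hx, y, hy, S, hS, hpS⟩ := exists_isArc_mem_of_chain hQ hQc hQQ hQd hQp
  exact hpT (hT hS (hQT 0 hx) (hQT 0 hy) hpS)

end Closed

/-! ### Local path connectedness -/

section LocallyConnected

theorem exists_seq_of_reflTransGen {α : Type*} {r : α → α → Prop} {x y : α}
    (h : Relation.ReflTransGen r x y) (hy : r y y) :
    ∃ (c : ℕ → α) (m : ℕ), c 0 = x ∧ (∀ i, m ≤ i → c i = y) ∧ ∀ i, r (c i) (c (i + 1)) := by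
  induction h using Relation.ReflTransGen.head_induction_on with
  | refl => exact ⟨fun _ => y, 0, rfl, fun _ _ => rfl, fun _ => hy⟩
  | @head x _ h _ ih =>
    obtain ⟨c, m, rfl, hcm, hc⟩ := ih
    refine ⟨fun i => Nat.casesOn i x c, m + 1, rfl, ?_, ?_⟩
    · rintro (_ | i) hi
      · omega
      · exact hcm i (by omega)
    · rintro (_ | i)
      exacts [h, hc i]

theorem rel_concat_succ {α : Type*} {r : α → α → Prop} {c : ℕ → ℕ → α} {M : ℕ} (hM : 0 < M)
    (hc : ∀ k, c k M = c (k + 1) 0) (hr : ∀ k i, r (c k i) (c k (i + 1))) (j : ℕ) :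
    r (c (j / M) (j % M)) (c ((j + 1) / M) ((j + 1) % M)) := by
  have hj := Nat.mod_add_div j M
  rcases (Nat.succ_le_of_lt (Nat.mod_lt j hM)).lt_or_eq with hlt | heq
  · obtain ⟨hdiv, hmod⟩ := (Nat.div_mod_unique (a := j + 1) (d := j / M) hM).2 ⟨by omega, hlt⟩
    rw [hdiv, hmod]
    exact hr _ _
  · obtain ⟨hdiv, hmod⟩ := (Nat.div_mod_unique (a := j + 1) (d := j / M + 1) hM).2
      ⟨show 0 + M * (j / M + 1) = j + 1 by rw [mul_add]; omega, hM⟩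
    have hlast := hr (j / M) (j % M)
    rw [show j % M + 1 = M from heq, hc] at hlast
    rwa [hdiv, hmod]

variable {X : Type*} [MetricSpace X] {δ ε : ℝ} {x y : X}

/-- `ConnectedWithin ε x y` says that `x` and `y` lie in a common connected set of diameter at
most `ε`. -/
def ConnectedWithin (ε : ℝ) (x y : X) : Prop :=
  ∃ V : Set X, IsPreconnected V ∧ x ∈ V ∧ y ∈ V ∧ ∀ z ∈ V, ∀ w ∈ V, dist z w ≤ ε

theorem connectedWithin_self (hε : 0 ≤ ε) (x : X) : ConnectedWithin ε x x :=
  ⟨{x}, isPreconnected_singleton, rfl, rfl, by rintro _ rfl _ rfl; rwa [dist_self]⟩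

theorem ConnectedWithin.symm (h : ConnectedWithin ε x y) : ConnectedWithin ε y x :=
  let ⟨V, hV, hx, hy, hd⟩ := h
  ⟨V, hV, hy, hx, hd⟩

theorem ConnectedWithin.dist_le (h : ConnectedWithin ε x y) : dist x y ≤ ε :=
  let ⟨_, _, hx, hy, hd⟩ := h
  hd x hx y hy

theorem eventually_connectedWithin [LocallyConnectedSpace X] (hε : 0 < ε) (x : X) :
    ∀ᶠ y in 𝓝 x, ConnectedWithin ε x y := by
  obtain ⟨V, hVb, hVo, hxV, hV⟩ := locallyConnectedSpace_iff_subsets_isOpen_isConnected.1 ‹_› x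
    (ball x (ε / 2)) (ball_mem_nhds x (half_pos hε))
  filter_upwards [hVo.mem_nhds hxV] with y hy
  refine ⟨V, hV.isPreconnected, hxV, hy, fun z hz w hw => ?_⟩
  linarith [dist_triangle_right z w x, mem_ball.1 (hVb hz), mem_ball.1 (hVb hw)]

theorem ConnectedWithin.reflTransGen [LocallyConnectedSpace X] (h : ConnectedWithin ε x y)
    (hδ : 0 < δ) :
    Relation.ReflTransGen (fun u v => ConnectedWithin δ u v ∧ dist u x ≤ ε) x y := by
  obtain ⟨V, hV, hx, hy, hd⟩ := h
  refine hV.induction₂' _ (fun u hu => ?_) (fun u v w _ _ _ => .trans) hx hy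
  filter_upwards [nhdsWithin_le_nhds (eventually_connectedWithin hδ u), self_mem_nhdsWithin]
    with v huv hv
  exact ⟨.single ⟨huv, hd u hu x hx⟩, .single ⟨huv.symm, hd v hv x hx⟩⟩

theorem exists_connectedWithin_refinement [LocallyConnectedSpace X] (hδ : 0 < δ) {a : ℕ → X}
    {N : ℕ} (ha : ∀ k, N ≤ k → a k = y) (hd : ∀ k, ConnectedWithin ε (a k) (a (k + 1))) :
    ∃ (b : ℕ → X) (M : ℕ), 0 < M ∧ b 0 = a 0 ∧ (∀ k, N * M ≤ k → b k = y) ∧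
      (∀ k, ConnectedWithin δ (b k) (b (k + 1))) ∧ ∀ k, dist (b k) (a (k / M)) ≤ ε := by
  have h : ∀ k, ∃ (c : ℕ → X) (m : ℕ), (N ≤ k → m = 0) ∧ c 0 = a k ∧
      (∀ i, m ≤ i → c i = a (k + 1)) ∧
      ∀ i, ConnectedWithin δ (c i) (c (i + 1)) ∧ dist (c i) (a k) ≤ ε := by
    intro k
    by_cases hk : N ≤ k
    · refine ⟨fun _ => y, 0, fun _ => rfl, (ha k hk).symm, fun _ _ => (ha _ (by omega)).symm,
        fun _ => ⟨connectedWithin_self hδ.le y, ?_⟩⟩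
      simpa only [ha k hk, ha (k + 1) (by omega)] using (hd k).dist_le
    · obtain ⟨c, m, hc⟩ := exists_seq_of_reflTransGen ((hd k).reflTransGen hδ)
        ⟨connectedWithin_self hδ.le _, (hd k).symm.dist_le⟩
      exact ⟨c, m, fun h => absurd h hk, hc⟩
  choose c m hm hc₀ hcm hc using h
  obtain ⟨M, hM₀, hM⟩ : ∃ M, 0 < M ∧ ∀ k, m k ≤ M := by
    refine ⟨(Finset.range N).sup m + 1, Nat.succ_pos _, fun k => ?_⟩
    by_cases hk : N ≤ k
    · exact hm k hk ▸ Nat.zero_le _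
    · exact (Finset.le_sup (Finset.mem_range.2 (not_le.1 hk))).trans (Nat.le_succ _)
  refine ⟨fun j => c (j / M) (j % M), M, hM₀, by simp only [Nat.zero_div, Nat.zero_mod, hc₀],
    fun k hk => ?_, rel_concat_succ hM₀ (fun k => (hcm k M (hM k)).trans (hc₀ _).symm)
      fun k i => (hc k i).1, fun k => (hc _ _).2⟩
  have hN : N ≤ k / M := (Nat.le_div_iff_mul_le hM₀).2 hk
  exact (hcm _ _ (hm _ hN ▸ Nat.zero_le _)).trans (ha _ (by omega))

theorem continuousOn_of_dist_le {Y : Type*} [TopologicalSpace Y] {f : ℕ → Y → X} {g : Y → X}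
    {s : Set Y} {e : ℕ → ℝ} (he : Tendsto e atTop (𝓝 0))
    (hfg : ∀ n, ∀ t ∈ s, dist (f n t) (g t) ≤ e n)
    (hf : ∀ n, ∀ t ∈ s, ∀ᶠ u in 𝓝[s] t, dist (f n u) (f n t) ≤ e n) : ContinuousOn g s := by
  intro t ht
  refine Metric.tendsto_nhds.2 fun η hη => ?_
  obtain ⟨n, hn⟩ := (he.eventually_lt_const (div_pos hη three_pos)).exists
  filter_upwards [hf n t ht, self_mem_nhdsWithin] with u hu hus
  linarith [dist_triangle4_left (f n u) (f n t) (g u) (g t), hfg n u hus, hfg n t ht]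

theorem eventually_dist_floor_le {a : ℕ → X} (ha : ∀ k, dist (a k) (a (k + 1)) ≤ ε) (N t : ℝ) :
    ∀ᶠ u in 𝓝 t, dist (a ⌊u * N⌋₊) (a ⌊t * N⌋₊) ≤ ε := by
  have hstep : ∀ u v : ℝ, u ≤ v → v < u + 1 → dist (a ⌊u⌋₊) (a ⌊v⌋₊) ≤ ε := by
    intro u v huv hvu
    have hlt : ⌊v⌋₊ < ⌊u⌋₊ + 2 :=
      (Nat.floor_lt' (Nat.succ_ne_zero _)).2 (by push_cast; linarith [Nat.lt_floor_add_one u])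
    rcases (Nat.floor_mono huv).eq_or_lt with h | h
    · rw [← h, dist_self]
      exact dist_nonneg.trans (ha 0)
    · rw [show ⌊v⌋₊ = ⌊u⌋₊ + 1 by omega]
      exact ha _
  have hcont : Tendsto (fun u => u * N) (𝓝 t) (𝓝 (t * N)) := (continuous_mul_const N).tendsto t
  filter_upwards [hcont.eventually (Ioo_mem_nhds (sub_one_lt (t * N)) (lt_add_one (t * N)))]
    with u hu
  rcases le_total (u * N) (t * N) with h | h
  · exact hstep _ _ h (by linarith [hu.1])
  · rw [dist_comm]
    exact hstep _ _ h hu.2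

theorem exists_seq_connectedWithin [LocallyConnectedSpace X] {e : ℕ → ℝ} (he : ∀ n, 0 < e n)
    (hxy : ConnectedWithin (e 0) x y) :
    ∃ (a : ℕ → ℕ → X) (N : ℕ → ℕ), (∀ k, dist (a 0 k) x ≤ e 0) ∧ (∀ n, a n 0 = x) ∧
      (∀ n, a n (N n) = y) ∧ (∀ n k, dist (a n k) (a n (k + 1)) ≤ e n) ∧
      ∀ n, ∃ M, 0 < M ∧ N (n + 1) = N n * M ∧ ∀ k, dist (a (n + 1) k) (a n (k / M)) ≤ e n := by
  obtain ⟨s, hP, hR⟩ := exists_seq_of_forall_exists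
    (P := fun n (s : (ℕ → X) × ℕ) => (n = 0 → ∀ k, dist (s.1 k) x ≤ e 0) ∧ s.1 0 = x ∧
      (∀ k, s.2 ≤ k → s.1 k = y) ∧ ∀ k, ConnectedWithin (e n) (s.1 k) (s.1 (k + 1)))
    (r := fun n s t => ∃ M, 0 < M ∧ t.2 = s.2 * M ∧ ∀ k, dist (t.1 k) (s.1 (k / M)) ≤ e n) (by
      refine ⟨(fun k => Nat.casesOn k x fun _ => y, 1), fun _ => ?_, rfl, ?_, ?_⟩
      · rintro (_ | _)
        exacts [(dist_self x).trans_le (he 0).le, hxy.symm.dist_le]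
      · rintro (_ | k) hk
        exacts [absurd hk (by simp), rfl]
      · rintro (_ | _)
        exacts [hxy, connectedWithin_self (he 0).le y]) (by
      rintro n ⟨a, N⟩ ⟨-, ha₀, haN, ha⟩
      obtain ⟨b, M, hM, hb₀, hbN, hb, hba⟩ :=
        exists_connectedWithin_refinement (he (n + 1)) haN ha
      exact ⟨(b, N * M), ⟨fun h => absurd h n.succ_ne_zero, hb₀.trans ha₀, hbN, hb⟩,
        M, hM, rfl, hba⟩)
  exact ⟨fun n => (s n).1, fun n => (s n).2, (hP 0).1 rfl, fun n => (hP n).2.1,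
    fun n => (hP n).2.2.1 _ le_rfl, fun n k => ((hP n).2.2.2 k).dist_le, hR⟩

theorem exists_tendsto_of_dist_le_geometric {Y : Type*} {f : ℕ → Y → X}
    (hx : IsComplete (closedBall x (2 * ε))) (hf₀ : ∀ t, dist (f 0 t) x ≤ ε)
    (hf : ∀ t n, dist (f n t) (f (n + 1) t) ≤ ε / 2 / 2 ^ n) :
    ∃ g : Y → X, (∀ t, g t ∈ closedBall x (2 * ε)) ∧ (∀ t, Tendsto (f · t) atTop (𝓝 (g t))) ∧
      ∀ n t, dist (f n t) (g t) ≤ ε / 2 ^ n := by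
  have hfx : ∀ n t, dist (f n t) x ≤ 2 * ε - ε / 2 ^ n := by
    intro n t
    induction n with
    | zero => linarith [hf₀ t, pow_zero (2 : ℝ), div_one ε]
    | succ n ih =>
      rw [pow_succ', ← div_div]
      linarith [dist_triangle_left (f (n + 1) t) x (f n t), hf t n, div_right_comm ε 2 (2 ^ n)]
  have hmem : ∀ t n, f n t ∈ closedBall x (2 * ε) := fun t n => by
    have hε : 0 ≤ ε := dist_nonneg.trans (hf₀ t)
    exact (hfx n t).trans (sub_le_self _ (by positivity))
  choose g hgx hg using fun t =>
    cauchySeq_tendsto_of_isComplete hx (hmem t) (cauchySeq_of_le_geometric_two (hf t))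
  exact ⟨g, hgx, hg, fun n t => dist_le_of_le_geometric_two_of_tendsto (hf t) (hg t) n⟩

theorem ConnectedWithin.joinedIn_closedBall [LocallyConnectedSpace X] (hε : 0 < ε)
    (hx : IsComplete (closedBall x (2 * ε))) (hxy : ConnectedWithin (ε / 2) x y) :
    JoinedIn (closedBall x (2 * ε)) x y := by
  obtain ⟨a, N, ha, ha₀, haN, had, hstep⟩ := exists_seq_connectedWithin
    (e := fun n => ε / 2 / 2 ^ n) (fun n => by positivity) (by rwa [pow_zero, div_one])
  have hfloor : ∀ (t : ℝ) n,
      dist (a n ⌊t * N n⌋₊) (a (n + 1) ⌊t * N (n + 1)⌋₊) ≤ ε / 2 / 2 ^ n := by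
    intro t n
    obtain ⟨M, hM, hN, hd⟩ := hstep n
    have hdiv : ⌊t * N n⌋₊ = ⌊t * N (n + 1)⌋₊ / M := by
      rw [← Nat.floor_div_natCast, hN, Nat.cast_mul, ← mul_assoc,
        mul_div_cancel_right₀ _ (Nat.cast_ne_zero.2 hM.ne')]
    rw [dist_comm, hdiv]
    exact hd _
  obtain ⟨g, hgx, hg, hfg⟩ := exists_tendsto_of_dist_le_geometric
    (f := fun n (t : ℝ) => a n ⌊t * N n⌋₊) hx
    (fun t => (ha _).trans (by rw [pow_zero, div_one]; exact half_le_self hε.le)) hfloor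
  have hg₀ : g 0 = x := by
    refine tendsto_nhds_unique (hg 0) (tendsto_const_nhds.congr fun n => ?_)
    simp only [zero_mul, Nat.floor_zero, ha₀]
  have hg₁ : g 1 = y := by
    refine tendsto_nhds_unique (hg 1) (tendsto_const_nhds.congr fun n => ?_)
    simp only [one_mul, Nat.floor_natCast, haN]
  have hlim : Tendsto (fun n : ℕ => ε / 2 ^ n) atTop (𝓝 0) :=
    tendsto_const_nhds.div_atTop (tendsto_pow_atTop_atTop_of_one_lt one_lt_two)
  have hle : ∀ n : ℕ, ε / 2 / 2 ^ n ≤ ε / 2 ^ n := fun n => by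
    gcongr
    exact half_le_self hε.le
  exact JoinedIn.ofLine (continuousOn_of_dist_le hlim (fun n t _ => hfg n t) fun n t _ =>
    nhdsWithin_le_nhds (eventually_dist_floor_le (fun k => (had n k).trans (hle n)) _ t))
    hg₀ hg₁ (image_subset_iff.2 fun t _ => hgx t)

theorem locallyPathConnectedSpace_of_locallyCompact [LocallyCompactSpace X]
    [LocallyConnectedSpace X] : LocallyPathConnectedSpace X := by
  refine locallyPathConnectedSpace_iff_pathComponentIn_mem_nhds.2 fun x U hU hxU => ?_
  obtain ⟨K, hK, hKU, hKc⟩ := local_compact_nhds (hU.mem_nhds hxU)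
  obtain ⟨ε, hε, hεK⟩ := nhds_basis_closedBall.mem_iff.1 hK
  have hε' : 2 * (ε / 2) = ε := mul_div_cancel₀ ε two_ne_zero
  have hcomplete : IsComplete (closedBall x (2 * (ε / 2))) :=
    hε'.symm ▸ (hKc.of_isClosed_subset isClosed_closedBall hεK).isComplete
  filter_upwards [eventually_connectedWithin (half_pos (half_pos hε)) x] with y hy
  exact (hy.joinedIn_closedBall (half_pos hε) hcomplete).mono (hε'.symm ▸ hεK.trans hKU)

end LocallyConnected

/-! ### The retraction -/

section Retraction

variable {X : Type*} [TopologicalSpace X] {s T C : Set X} {x : X} {r : X → X}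

theorem inter_frontier_nonempty_of_isPreconnected (hC : IsPreconnected C)
    (hs : (C ∩ s).Nonempty) (hs' : (C ∩ sᶜ).Nonempty) : (C ∩ frontier s).Nonempty := by
  have := isPreconnected_iff_preconnectedSpace.1 hC
  obtain ⟨⟨x, hxC, hxs⟩, ⟨y, hyC, hys⟩⟩ := And.intro hs hs'
  obtain ⟨z, hz⟩ := nonempty_frontier_iff (s := (Subtype.val ⁻¹' s : Set C)).2
    ⟨⟨⟨x, hxC⟩, hxs⟩, (ne_univ_iff_exists_notMem _).2 ⟨⟨y, hyC⟩, hys⟩⟩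
  exact ⟨z, z.2, continuous_subtype_val.frontier_preimage_subset s hz⟩

theorem frontier_connectedComponentIn_compl_subset [LocallyConnectedSpace X] (hT : IsClosed T) :
    frontier (connectedComponentIn Tᶜ x) ⊆ T := by
  have hopen : ∀ y, IsOpen (connectedComponentIn Tᶜ y) := fun _ =>
    hT.isOpen_compl.connectedComponentIn
  intro y hy
  by_contra hyT
  have hyC := mem_connectedComponentIn (mem_compl hyT)
  obtain ⟨z, hzy, hzx⟩ := mem_closure_iff.1 hy.1 _ (hopen y) hyC
  rw [(hopen x).frontier_eq] at hy
  rw [connectedComponentIn_eq hzy, ← connectedComponentIn_eq hzx] at hyC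
  exact hy.2 hyC

theorem continuousAt_of_mem_of_frontier_eq [LocallyConnectedSpace X] (hx : x ∈ T)
    (hfix : ∀ x ∈ T, r x = x) (hbd : ∀ x ∉ T, frontier (connectedComponentIn Tᶜ x) = {r x}) :
    ContinuousAt r x := by
  refine tendsto_def.2 fun W hW => ?_
  rw [hfix x hx] at hW
  obtain ⟨V, hVW, hVo, hxV, hV⟩ :=
    locallyConnectedSpace_iff_subsets_isOpen_isConnected.1 ‹_› x W hW
  filter_upwards [hVo.mem_nhds hxV] with y hy
  refine hVW ?_
  by_cases hyT : y ∈ T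
  · rwa [hfix y hyT]
  have hmeet := inter_frontier_nonempty_of_isPreconnected hV.isPreconnected
    (s := connectedComponentIn Tᶜ y) ⟨y, hy, mem_connectedComponentIn hyT⟩
    ⟨x, hxV, fun h => connectedComponentIn_subset _ _ h hx⟩
  rwa [hbd y hyT, inter_singleton_nonempty] at hmeet

theorem continuousAt_of_notMem_of_frontier_eq [LocallyConnectedSpace X] (hT : IsClosed T)
    (hx : x ∉ T) (hbd : ∀ x ∉ T, frontier (connectedComponentIn Tᶜ x) = {r x}) :
    ContinuousAt r x := by
  have hconst : ∀ y ∈ connectedComponentIn Tᶜ x, r x = r y := by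
    intro y hy
    rw [← singleton_eq_singleton_iff, ← hbd x hx,
      ← hbd y (connectedComponentIn_subset _ _ hy), connectedComponentIn_eq hy]
  exact continuousAt_const.congr (mem_of_superset
    (hT.isOpen_compl.connectedComponentIn.mem_nhds (mem_connectedComponentIn hx)) hconst)

end Retraction

theorem MaximalCyclic.isClosed {X : Type} [MetricSpace X] [LocallyCompactSpace X]
    [LocallyConnectedSpace X] {T : Set X} (hT : MaximalCyclic T) : IsClosed T :=
  have : LocallyPathConnectedSpace X := locallyPathConnectedSpace_of_locallyCompact
  hT.2.1.isClosed_of_arcConvex hT.arcConvex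

theorem continuous_retraction_onto_maximalCyclic_general
    (X : Type) [MetricSpace X] [LocallyCompactSpace X] [LocallyConnectedSpace X]
    (T : Set X) (hT : MaximalCyclic T) (r : X → X)
    (hfix : ∀ x ∈ T, r x = x)
    (hbd : ∀ x ∉ T, frontier (connectedComponentIn Tᶜ x) = {r x}) :
    Continuous r ∧ ∀ x, r x ∈ T := by
  have hTc : IsClosed T := hT.isClosed
  refine ⟨continuous_iff_continuousAt.2 fun x => ?_, fun x => ?_⟩
  · by_cases hx : x ∈ T
    · exact continuousAt_of_mem_of_frontier_eq hx hfix hbd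
    · exact continuousAt_of_notMem_of_frontier_eq hTc hx hbd
  · by_cases hx : x ∈ T
    · rwa [hfix x hx]
    · exact frontier_connectedComponentIn_compl_subset hTc (hbd x hx ▸ mem_singleton (r x))

/-- The natural retraction of a Peano space onto a maximal cyclic subset `T`
(identity on `T`, and sending each connected component of `X \ T` to the unique
boundary point of that component) is continuous; in particular `T` is a retract
of `X`. -/
theorem continuous_retraction_onto_maximalCyclic
    (X : Type) [MetricSpace X] [CompactSpace X] [ConnectedSpace X] [LocallyConnectedSpace X]
    (T : Set X) (hT : MaximalCyclic T) (r : X → X)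
    (hfix : ∀ x ∈ T, r x = x)
    (hbd : ∀ x ∉ T, frontier (connectedComponentIn Tᶜ x) = {r x}) :
    Continuous r ∧ ∀ x, r x ∈ T :=
  continuous_retraction_onto_maximalCyclic_general X T hT r hfix hbd
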